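/- arXiv:2305.19279 — 5 statements merged into one kernel-verified Lean document; each statement's English description precedes it below -/
import Mathlib

section
/- Let v : ℝⁿ → ℝⁿ be a continuous function and let r > 0 be such that v(u)·u ≥ 0 for every u ∈ ℝⁿ with ‖u‖ = r (Euclidean norm and dot product). Then there exists a point u* ∈ ℝⁿ with ‖u*‖ ≤ r such that v(u*) = 0. -/
open scoped RealInnerProductSpace

/-!
A `C¹` field `w` on the closed ball without zeros and pointing strictly outwards on the sphere gives
a `C¹` retraction of the ball onto the sphere: follow the ray from `x` in direction `w x` until it
leaves the ball. An arbitrary continuous `v` is reduced to this case by smoothing `v + δ • id` and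
letting `δ → 0`.

That no `C¹` retraction `f` exists is the Milnor–Rogers volume argument. For small `t` the map
`x ↦ x + t • (f x - x)` permutes the ball, so its Jacobian determinant integrates to the volume of
the ball. This integral is a polynomial in `t`, hence equal to the volume at `t = 1` as well; but
there the integrand `det (f' x)` vanishes because `‖f‖` is constant.
-/

open MeasureTheory Metric Module Polynomial Set Topology
open scoped NNReal

section Perturbation

theorem segment_inter_frontier_nonempty {F : Type*} [AddCommGroup F] [Module ℝ F]
    [TopologicalSpace F] [ContinuousAdd F] [ContinuousSMul ℝ F] {s : Set F} {x y : F}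
    (hx : x ∈ s) (hy : y ∉ s) : (segment ℝ x y ∩ frontier s).Nonempty := by
  have hcover : segment ℝ x y ⊆ closure s ∪ closure sᶜ :=
    (subset_univ _).trans <| (union_compl_self s).symm.subset.trans <|
      union_subset_union subset_closure subset_closure
  rw [frontier_eq_closure_inter_closure]
  exact isPreconnected_closed_iff.1 (convex_segment x y).isPreconnected _ _
    isClosed_closure isClosed_closure hcover
    ⟨x, left_mem_segment ℝ x y, subset_closure hx⟩
    ⟨y, right_mem_segment ℝ x y, subset_closure hy⟩

variable {E : Type*} [NormedAddCommGroup E] {K : ℝ≥0} {g : E → E} {s : Set E}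

theorem lipschitzWith_indicator_of_eqOn_frontier_zero [NormedSpace ℝ E] (hs : IsClosed s)
    (hg : LipschitzOnWith K g s) (hg₀ : EqOn g 0 (frontier s)) :
    LipschitzWith K (s.indicator g) := by
  have dist_le_of_mem_of_notMem : ∀ x ∈ s, ∀ y ∉ s,
      dist (s.indicator g x) (s.indicator g y) ≤ K * dist x y := by
    intro x hx y hy
    obtain ⟨z, hz, hzs⟩ := segment_inter_frontier_nonempty hx hy
    have hgz : g z = 0 := hg₀ hzs
    calc dist (s.indicator g x) (s.indicator g y) = dist (g x) (g z) := by
          rw [indicator_of_mem hx, indicator_of_notMem hy, hgz]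
      _ ≤ K * dist x z := hg.dist_le_mul x hx z (hs.frontier_subset hzs)
      _ ≤ K * dist x y := by
          gcongr
          exact (le_add_of_nonneg_right dist_nonneg).trans_eq (dist_add_dist_of_mem_segment hz)
  refine LipschitzWith.of_dist_le_mul fun x y => ?_
  by_cases hx : x ∈ s <;> by_cases hy : y ∈ s
  · simpa only [indicator_of_mem, hx, hy] using hg.dist_le_mul x hx y hy
  · exact dist_le_of_mem_of_notMem x hx y hy
  · simpa only [dist_comm] using dist_le_of_mem_of_notMem y hy x hx
  · simp only [indicator_of_notMem, hx, hy, not_false_eq_true, dist_self]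
    positivity

theorem bijective_add_of_lipschitzWith_lt_one [CompleteSpace E] (hg : LipschitzWith K g)
    (hK : K < 1) : Function.Bijective fun x => x + g x := by
  constructor
  · exact (AntilipschitzWith.id.add_lipschitzWith hg (by simpa using hK)).injective
  · intro y
    have hcontr : ContractingWith K fun x => y - g x :=
      ⟨hK, LipschitzWith.of_dist_le_mul fun a b => by
        simpa only [dist_sub_left] using hg.dist_le_mul a b⟩
    exact ⟨hcontr.fixedPoint, (sub_eq_iff_eq_add.1 hcontr.fixedPoint_isFixedPt).symm⟩

theorem bijOn_of_bijective_of_eqOn_compl_id {α : Type*} {f : α → α} {s : Set α}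
    (hf : Function.Bijective f) (hfs : EqOn f id sᶜ) : BijOn f s s := by
  simpa only [compl_compl] using ((bijOn_id sᶜ).congr hfs.symm).compl hf

theorem bijOn_add_of_lipschitzOnWith_lt_one [NormedSpace ℝ E] [CompleteSpace E]
    (hs : IsClosed s) (hg : LipschitzOnWith K g s) (hK : K < 1)
    (hg₀ : EqOn g 0 (frontier s)) : BijOn (fun x => x + g x) s s := by
  have hbij : BijOn (fun x => x + s.indicator g x) s s :=
    bijOn_of_bijective_of_eqOn_compl_id
      (bijective_add_of_lipschitzWith_lt_one
        (lipschitzWith_indicator_of_eqOn_frontier_zero hs hg hg₀) hK)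
      fun x hx => by simp only [indicator_of_notMem hx, add_zero, id]
  exact hbij.congr fun x hx => by simp only [indicator_of_mem hx]

end Perturbation

section Polynomial

theorem exists_polynomial_eval_eq_det_one_add_smul {R M : Type*} [CommRing R] [Nontrivial R]
    [AddCommGroup M] [Module R M] [Module.Free R M] [Module.Finite R M] (A : M →ₗ[R] M) :
    ∃ p : R[X], p.natDegree ≤ finrank R M ∧ ∀ t, p.eval t = LinearMap.det (1 + t • A) := by
  classical
  let b := Module.Free.chooseBasis R M
  let N := LinearMap.toMatrix b b A
  refine ⟨((X : R[X]) • N.map C + (1 : Matrix _ _ R).map C).det, ?_, fun t => ?_⟩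
  · rw [finrank_eq_card_chooseBasisIndex]
    exact natDegree_det_X_add_C_le N 1
  · have heval : (evalRingHom t).mapMatrix ((X : R[X]) • N.map C + (1 : Matrix _ _ R).map C) =
        LinearMap.toMatrix b b (1 + t • A) := by
      ext i j
      by_cases hij : i = j <;> simp [N, LinearMap.toMatrix_one, hij, add_comm, mul_comm _ t]
    rw [← coe_evalRingHom, RingHom.map_det, heval, LinearMap.det_toMatrix]

theorem integral_polynomial_eval_eq_of_infinite {α : Type*} [MeasurableSpace α] {μ : Measure α}
    {p : α → ℝ[X]} {d : ℕ} (hdeg : ∀ x, (p x).natDegree ≤ d)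
    {T : Set ℝ} (hT : T.Infinite) (hint : ∀ t ∈ T, Integrable (fun x => (p x).eval t) μ) {c : ℝ}
    (hc : ∀ t ∈ T, ∫ x, (p x).eval t ∂μ = c) (a : ℝ) : ∫ x, (p x).eval a ∂μ = c := by
  obtain ⟨nodes, hnodesT, hcard⟩ := hT.exists_subset_card_eq (d + 1)
  have hinj : InjOn (id : ℝ → ℝ) nodes := Function.injective_id.injOn
  let L : ℝ → ℝ := fun t => (Lagrange.basis nodes id t).eval a
  have hL : ∑ t ∈ nodes, L t = 1 := by
    rw [← eval_finsetSum, Lagrange.sum_basis hinj (Finset.card_pos.1 (by omega)), eval_one]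
  have hinterp : ∀ x, (p x).eval a = ∑ t ∈ nodes, (p x).eval t * L t := by
    intro x
    have hlt : (p x).degree < nodes.card :=
      degree_le_natDegree.trans_lt (by exact_mod_cast (hdeg x).trans_lt (by omega))
    conv_lhs => rw [Lagrange.eq_interpolate hinj hlt]
    simp only [Lagrange.interpolate_apply, eval_finsetSum, eval_mul, eval_C, id, L]
  calc ∫ x, (p x).eval a ∂μ = ∫ x, ∑ t ∈ nodes, (p x).eval t * L t ∂μ := by simp only [hinterp]
    _ = ∑ t ∈ nodes, (∫ x, (p x).eval t ∂μ) * L t := by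
        rw [integral_finsetSum _ fun t ht => (hint t (hnodesT ht)).mul_const (L t)]
        simp only [integral_mul_const]
    _ = ∑ t ∈ nodes, c * L t := Finset.sum_congr rfl fun t ht => by rw [hc t (hnodesT ht)]
    _ = c := by rw [← Finset.mul_sum, hL, mul_one]

end Polynomial

section VolumeIntegral

variable {E : Type*} [NormedAddCommGroup E] [NormedSpace ℝ E]

theorem eventually_det_one_add_pos : ∀ᶠ A : E →L[ℝ] E in 𝓝 0, 0 < (1 + A).det := by
  have hcont : Continuous fun A : E →L[ℝ] E => (1 + A).det :=
    ContinuousLinearMap.continuous_det.comp (continuous_const.add continuous_id)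
  have hdet : (1 + (0 : E →L[ℝ] E)).det = 1 := by simp [ContinuousLinearMap.det]
  exact (hcont.tendsto 0).eventually (lt_mem_nhds (hdet ▸ one_pos))

variable [FiniteDimensional ℝ E] [MeasurableSpace E] [BorelSpace E] (μ : Measure E)
  [μ.IsAddHaarMeasure] {K : ℝ≥0} {s : Set E} {g : E → E} {g' : E → E →L[ℝ] E}

theorem setIntegral_abs_det_one_add_eq_measureReal (hs : IsClosed s)
    (hg : LipschitzOnWith K g s) (hK : K < 1) (hg₀ : EqOn g 0 (frontier s))
    (hg' : ∀ x ∈ s, HasFDerivWithinAt g (g' x) s x) :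
    ∫ x in s, |(1 + g' x).det| ∂μ = μ.real s := by
  have hbij := bijOn_add_of_lipschitzOnWith_lt_one hs hg hK hg₀
  have hderiv : ∀ x ∈ s, HasFDerivWithinAt (fun x => x + g x) (1 + g' x) s x :=
    fun x hx => (hasFDerivWithinAt_id x s).add (hg' x hx)
  simpa [hbij.image_eq] using (integral_image_eq_integral_abs_det_fderiv_smul μ
    hs.measurableSet hderiv hbij.injOn fun _ => (1 : ℝ)).symm

theorem eventually_setIntegral_det_one_add_smul_eq_measureReal (hs : IsCompact s)
    (hconv : Convex ℝ s) (hg₀ : EqOn g 0 (frontier s))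
    (hg' : ∀ x ∈ s, HasFDerivWithinAt g (g' x) s x) (hcont : ContinuousOn g' s) :
    ∀ᶠ t : ℝ in 𝓝 0, ∫ x in s, (1 + t • g' x).det ∂μ = μ.real s := by
  obtain ⟨C, hC⟩ : ∃ C : ℝ≥0, ∀ x ∈ s, ‖g' x‖₊ ≤ C := by
    obtain ⟨C, hC⟩ := hs.exists_bound_of_continuousOn hcont
    exact ⟨C.toNNReal, fun x hx => NNReal.le_toNNReal_of_coe_le (hC x hx)⟩
  obtain ⟨ε, hε, hdet⟩ := Metric.eventually_nhds_iff.1 (eventually_det_one_add_pos (E := E))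
  have hsmall : ∀ δ : ℝ, 0 < δ → ∀ᶠ t : ℝ in 𝓝 0, ‖t‖ * C < δ := fun δ hδ =>
    (Continuous.tendsto' (by fun_prop) 0 0 (by simp)).eventually_lt_const hδ
  filter_upwards [hsmall 1 one_pos, hsmall ε hε] with t htC htε
  have hbound : ∀ x ∈ s, ‖t • g' x‖₊ ≤ ‖t‖₊ * C := fun x hx => by
    rw [nnnorm_smul]
    gcongr
    exact hC x hx
  have hderiv : ∀ x ∈ s, HasFDerivWithinAt (fun x => t • g x) (t • g' x) s x :=
    fun x hx => (hg' x hx).const_smul t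
  have hpos : ∀ x ∈ s, 0 < (1 + t • g' x).det := fun x hx =>
    hdet <| calc
      dist (t • g' x) 0 = ‖t • g' x‖ := dist_zero_right _
      _ ≤ ‖t‖ * C := hbound x hx
      _ < ε := htε
  calc ∫ x in s, (1 + t • g' x).det ∂μ = ∫ x in s, |(1 + t • g' x).det| ∂μ :=
        setIntegral_congr_fun hs.measurableSet fun x hx => (abs_of_pos (hpos x hx)).symm
    _ = μ.real s := setIntegral_abs_det_one_add_eq_measureReal μ hs.isClosed
        (hconv.lipschitzOnWith_of_nnnorm_hasFDerivWithin_le hderiv hbound) htC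
        (fun x hx => by simp [hg₀ hx]) hderiv

theorem setIntegral_det_one_add_eq_measureReal (hs : IsCompact s) (hconv : Convex ℝ s)
    (hg₀ : EqOn g 0 (frontier s)) (hg' : ∀ x ∈ s, HasFDerivWithinAt g (g' x) s x)
    (hcont : ContinuousOn g' s) : ∫ x in s, (1 + g' x).det ∂μ = μ.real s := by
  choose p hdeg heval using fun x =>
    exists_polynomial_eval_eq_det_one_add_smul (g' x : E →ₗ[ℝ] E)
  have heval' : ∀ x t, (p x).eval t = (1 + t • g' x).det := heval
  have hint : ∀ t, IntegrableOn (fun x => (p x).eval t) s μ := fun t => by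
    simp only [heval']
    exact (ContinuousLinearMap.continuous_det.comp_continuousOn
      (continuousOn_const.add (hcont.const_smul t))).integrableOn_compact hs
  have hsmall := eventually_setIntegral_det_one_add_smul_eq_measureReal μ hs hconv hg₀ hg' hcont
  have h := integral_polynomial_eval_eq_of_infinite hdeg (infinite_of_mem_nhds 0 hsmall)
    (fun t _ => hint t) (fun t ht => by simpa only [heval', mem_ofPred_eq] using ht) 1
  simpa only [heval', one_smul] using h

end VolumeIntegral

variable {E : Type*} [NormedAddCommGroup E] [InnerProductSpace ℝ E]

section NoRetraction

variable [FiniteDimensional ℝ E]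

theorem det_eq_zero_of_hasFDerivWithinAt_of_norm_eq {r : ℝ} (hr : r ≠ 0) {s : Set E}
    {x : E} (hx : x ∈ s) (hs : UniqueDiffWithinAt ℝ s x) {f : E → E} {f' : E →L[ℝ] E}
    (hf : HasFDerivWithinAt f f' s x) (hnorm : ∀ y ∈ s, ‖f y‖ = r) : f'.det = 0 := by
  have horth : ∀ y, ⟪f x, f' y⟫ = 0 := by
    have hconst : HasFDerivWithinAt (fun y => ‖f y‖ ^ 2) (0 : E →L[ℝ] ℝ) s x :=
      (hasFDerivWithinAt_const (r ^ 2) x s).congr (fun y hy => by rw [hnorm y hy])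
        (by rw [hnorm x hx])
    intro y
    simpa using DFunLike.congr_fun (hs.eq hf.norm_sq hconst) y
  by_contra hdet
  obtain ⟨y, hy⟩ := (LinearMap.equivOfDetNeZero (f' : E →ₗ[ℝ] E) hdet).surjective (f x)
  have hy' : f' y = f x := hy
  have hfx : f x = 0 := inner_self_eq_zero.1 (hy' ▸ horth y)
  exact hr (by rw [← hnorm x hx, hfx, norm_zero])

theorem not_exists_contDiffOn_retraction_closedBall_sphere {r : ℝ} (hr : 0 < r) :
    ¬ ∃ f : E → E, ContDiffOn ℝ 1 f (closedBall 0 r) ∧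
      MapsTo f (closedBall 0 r) (sphere 0 r) ∧ EqOn f id (sphere 0 r) := by
  rintro ⟨f, hf, hmaps, hid⟩
  let : MeasurableSpace E := borel E
  have : BorelSpace E := ⟨rfl⟩
  have hconv : Convex ℝ (closedBall (0 : E) r) := convex_closedBall 0 r
  have hunique : UniqueDiffOn ℝ (closedBall (0 : E) r) :=
    uniqueDiffOn_convex hconv ((nonempty_ball.2 hr).mono ball_subset_interior_closedBall)
  let f' := fderivWithin ℝ f (closedBall 0 r)
  have hf' : ∀ x ∈ closedBall (0 : E) r, HasFDerivWithinAt f (f' x) (closedBall 0 r) x :=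
    fun x hx => (hf.differentiableOn one_ne_zero x hx).hasFDerivWithinAt
  have hvol : ∫ x in closedBall (0 : E) r, (1 + (f' x - 1)).det =
      volume.real (closedBall (0 : E) r) :=
    setIntegral_det_one_add_eq_measureReal volume (g := fun x => f x - x)
      (isCompact_closedBall 0 r) hconv
      (fun x hx => sub_eq_zero.2 (hid (frontier_closedBall (0 : E) hr.ne' ▸ hx)))
      (fun x hx => (hf' x hx).sub (hasFDerivWithinAt_id x _))
      ((hf.continuousOn_fderivWithin hunique le_rfl).sub continuousOn_const)
  have hzero : ∫ x in closedBall (0 : E) r, (1 + (f' x - 1)).det = 0 :=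
    setIntegral_eq_zero_of_forall_eq_zero fun x hx => by
      rw [add_sub_cancel]
      exact det_eq_zero_of_hasFDerivWithinAt_of_norm_eq hr.ne' hx (hunique x hx) (hf' x hx)
        fun y hy => mem_sphere_zero_iff_norm.1 (hmaps hy)
  have hpos : 0 < volume.real (closedBall (0 : E) r) :=
    ENNReal.toReal_pos (measure_closedBall_pos _ _ hr).ne' measure_closedBall_lt_top.ne
  exact hpos.ne' (hvol.symm.trans hzero)

end NoRetraction

section SphereExit

/-- A quarter of the discriminant of the quadratic equation `‖x + t • u‖ ^ 2 = r ^ 2` in `t`. -/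
noncomputable def sphereExitDiscr (r : ℝ) (x u : E) : ℝ :=
  ⟪u, x⟫ ^ 2 + ‖u‖ ^ 2 * (r ^ 2 - ‖x‖ ^ 2)

/-- The time at which the ray from a point `x` of the closed ball of radius `r` about the origin,
moving with velocity `u`, leaves that ball: the larger root `t` of `‖x + t • u‖ ^ 2 = r ^ 2`.
It is `0` by convention when `u = 0`. -/
noncomputable def sphereExitTime (r : ℝ) (x u : E) : ℝ :=
  (√(sphereExitDiscr r x u) - ⟪u, x⟫) / ‖u‖ ^ 2

variable {r : ℝ} {x u : E}

theorem sphereExitDiscr_nonneg (hx : ‖x‖ ≤ r) : 0 ≤ sphereExitDiscr r x u := by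
  have : 0 ≤ r ^ 2 - ‖x‖ ^ 2 := sub_nonneg.2 (by gcongr)
  unfold sphereExitDiscr
  positivity

theorem sphereExitDiscr_of_norm_eq (hx : ‖x‖ = r) : sphereExitDiscr r x u = ⟪u, x⟫ ^ 2 := by
  rw [sphereExitDiscr, hx, sub_self, mul_zero, add_zero]

theorem sphereExitDiscr_pos (hx : ‖x‖ ≤ r) (hu : u ≠ 0) (hux : ‖x‖ = r → 0 < ⟪u, x⟫) :
    0 < sphereExitDiscr r x u := by
  rcases hx.lt_or_eq with hlt | heq
  · have : 0 < r ^ 2 - ‖x‖ ^ 2 := sub_pos.2 (by gcongr)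
    unfold sphereExitDiscr
    positivity
  · rw [sphereExitDiscr_of_norm_eq heq]
    exact pow_pos (hux heq) 2

theorem norm_add_sphereExitTime_smul (hr : 0 ≤ r) (hx : ‖x‖ ≤ r) (hu : u ≠ 0) :
    ‖x + sphereExitTime r x u • u‖ = r := by
  have hu' : ‖u‖ ^ 2 ≠ 0 := by positivity
  have hroot : (sphereExitTime r x u * ‖u‖ ^ 2 + ⟪u, x⟫) ^ 2 = sphereExitDiscr r x u := by
    rw [sphereExitTime, div_mul_cancel₀ _ hu', sub_add_cancel,
      Real.sq_sqrt (sphereExitDiscr_nonneg hx)]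
  have hsq : ‖x + sphereExitTime r x u • u‖ ^ 2 = r ^ 2 := by
    rw [norm_add_sq_real, real_inner_smul_right, real_inner_comm, norm_smul, mul_pow,
      Real.norm_eq_abs, sq_abs]
    apply mul_left_cancel₀ hu'
    rw [sphereExitDiscr] at hroot
    linear_combination hroot
  exact (sq_eq_sq₀ (norm_nonneg _) hr).1 hsq

theorem sphereExitTime_eq_zero (hx : ‖x‖ = r) (hux : 0 ≤ ⟪u, x⟫) : sphereExitTime r x u = 0 := by
  rw [sphereExitTime, sphereExitDiscr_of_norm_eq hx, Real.sqrt_sq hux, sub_self, zero_div]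

theorem contDiffOn_sphereExitTime {F : Type*} [NormedAddCommGroup F] [NormedSpace ℝ F]
    {n : WithTop ℕ∞} {s : Set F} {f w : F → E} (hf : ContDiffOn ℝ n f s) (hw : ContDiffOn ℝ n w s)
    (hw₀ : ∀ y ∈ s, w y ≠ 0) (hdiscr : ∀ y ∈ s, sphereExitDiscr r (f y) (w y) ≠ 0) :
    ContDiffOn ℝ n (fun y => sphereExitTime r (f y) (w y)) s := by
  have hinner : ContDiffOn ℝ n (fun y => ⟪w y, f y⟫) s := hw.inner ℝ hf
  have hdiscr_smooth : ContDiffOn ℝ n (fun y => sphereExitDiscr r (f y) (w y)) s :=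
    (hinner.pow 2).add ((hw.norm_sq ℝ).mul (contDiffOn_const.sub (hf.norm_sq ℝ)))
  exact ((hdiscr_smooth.sqrt hdiscr).sub hinner).div (hw.norm_sq ℝ)
    fun y hy => pow_ne_zero 2 (norm_ne_zero_iff.2 (hw₀ y hy))

end SphereExit

section Zeros

variable [FiniteDimensional ℝ E] {r : ℝ}

theorem exists_eq_zero_of_contDiffOn_of_inner_pos (hr : 0 < r) {w : E → E}
    (hw : ContDiffOn ℝ 1 w (closedBall 0 r)) (hpos : ∀ x, ‖x‖ = r → 0 < ⟪w x, x⟫) :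
    ∃ x ∈ closedBall 0 r, w x = 0 := by
  by_contra! hne
  refine not_exists_contDiffOn_retraction_closedBall_sphere hr
    ⟨fun x => x + sphereExitTime r x (w x) • w x, ?_, fun x hx => ?_, fun x hx => ?_⟩
  · have hdiscr : ∀ x ∈ closedBall 0 r, sphereExitDiscr r x (w x) ≠ 0 := fun x hx =>
      (sphereExitDiscr_pos (mem_closedBall_zero_iff.1 hx) (hne x hx) (hpos x)).ne'
    exact contDiffOn_id.add ((contDiffOn_sphereExitTime contDiffOn_id hw hne hdiscr).smul hw)
  · exact mem_sphere_zero_iff_norm.2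
      (norm_add_sphereExitTime_smul hr.le (mem_closedBall_zero_iff.1 hx) (hne x hx))
  · have hx' : ‖x‖ = r := mem_sphere_zero_iff_norm.1 hx
    simp only [sphereExitTime_eq_zero hx' (hpos x hx').le, zero_smul, add_zero, id]

theorem exists_norm_lt_of_inner_nonneg (hr : 0 < r) {v : E → E} (hv : Continuous v)
    (hnonneg : ∀ x, ‖x‖ = r → 0 ≤ ⟪v x, x⟫) {ε : ℝ} (hε : 0 < ε) :
    ∃ x ∈ closedBall 0 r, ‖v x‖ < ε := by
  let δ := ε / 2 / r
  have hδ : 0 < δ := by positivity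
  have hδr : δ * r = ε / 2 := div_mul_cancel₀ _ hr.ne'
  obtain ⟨w, hw, hwv, -⟩ := (hv.add (continuous_const_smul δ)).exists_contDiff_approx 1
    (ε := fun _ => ε / 2) continuous_const fun _ => half_pos hε
  have hclose : ∀ x, ‖v x + δ • x - w x‖ < ε / 2 := fun x => by
    rw [← dist_eq_norm']
    exact hwv x
  have hpos : ∀ x, ‖x‖ = r → 0 < ⟪w x, x⟫ := by
    intro x hx
    have hsub : ⟪v x + δ • x - w x, x⟫ < ε / 2 * r :=
      calc ⟪v x + δ • x - w x, x⟫ ≤ ‖v x + δ • x - w x‖ * r := hx ▸ real_inner_le_norm _ _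
        _ < ε / 2 * r := by gcongr; exact hclose x
    have hexpand : ⟪v x + δ • x - w x, x⟫ = ⟪v x, x⟫ + ε / 2 * r - ⟪w x, x⟫ := by
      rw [inner_sub_left, inner_add_left, real_inner_smul_left, real_inner_self_eq_norm_sq, hx,
        ← hδr]
      ring
    linarith [hnonneg x hx]
  obtain ⟨x, hx, hwx⟩ := exists_eq_zero_of_contDiffOn_of_inner_pos hr hw.contDiffOn hpos
  have hδx : ‖δ • x‖ ≤ ε / 2 := by
    rw [norm_smul, Real.norm_of_nonneg hδ.le, ← hδr]
    gcongr
    exact mem_closedBall_zero_iff.1 hx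
  have hvδx : ‖v x + δ • x‖ < ε / 2 := by simpa only [hwx, sub_zero] using hclose x
  refine ⟨x, hx, ?_⟩
  calc ‖v x‖ = ‖v x + δ • x - δ • x‖ := by rw [add_sub_cancel_right]
    _ ≤ ‖v x + δ • x‖ + ‖δ • x‖ := norm_sub_le _ _
    _ < ε := by linarith

theorem zeros_of_vector_field_general (hr : 0 < r) {v : E → E}
    (hv : ContinuousOn v (closedBall 0 r)) (hnonneg : ∀ x, ‖x‖ = r → 0 ≤ ⟪v x, x⟫) :
    ∃ x, ‖x‖ ≤ r ∧ v x = 0 := by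
  have : TietzeExtension E := TietzeExtension.of_tvs ℝ
  obtain ⟨V, hV⟩ := ContinuousMap.exists_restrict_eq isClosed_closedBall
    (⟨_, hv.domRestrict⟩ : C(closedBall (0 : E) r, E))
  have hVv : EqOn V v (closedBall 0 r) := fun x hx => DFunLike.congr_fun hV ⟨x, hx⟩
  obtain ⟨x, hx, hmin⟩ := (isCompact_closedBall (0 : E) r).exists_isMinOn
    (nonempty_closedBall.2 hr.le) hv.norm
  refine ⟨x, mem_closedBall_zero_iff.1 hx, ?_⟩
  by_contra hvx
  obtain ⟨y, hy, hlt⟩ := exists_norm_lt_of_inner_nonneg hr V.continuous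
    (fun z hz => hVv (mem_closedBall_zero_iff.2 hz.le) ▸ hnonneg z hz) (norm_pos_iff.2 hvx)
  exact (hVv hy ▸ hlt).not_ge (hmin hy)

end Zeros

/-- **Zeros of a vector field.** If a continuous `v : ℝⁿ → ℝⁿ` satisfies `v(u)·u ≥ 0`
whenever `‖u‖ = r` (for some `r > 0`), then `v` has a zero in the closed ball of radius `r`. -/
theorem zeros_of_vector_field (n : ℕ)
    (v : EuclideanSpace ℝ (Fin n) → EuclideanSpace ℝ (Fin n))
    (hv : Continuous v) (r : ℝ) (hr : 0 < r)
    (h : ∀ u : EuclideanSpace ℝ (Fin n), ‖u‖ = r → 0 ≤ ⟪v u, u⟫) :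
    ∃ u : EuclideanSpace ℝ (Fin n), ‖u‖ ≤ r ∧ v u = 0 :=
  zeros_of_vector_field_general hr hv.continuousOn h
end

section
/- Under the hypotheses of the existence result (continuous σ̂_e : ℝᵈ → ℝᵈ satisfying material stability σ̂_e(ε)·ε ≥ a‖ε‖_e² − b with a > 0, b ≥ 0, and structural stability ‖u‖² ≤ c Σ_e w_e‖B_e u‖_e²), assume in addition strict monotonicity: there is θ > 0 such that (σ̂_e(ε′) − σ̂_e(ε″))·(ε′ − ε″) ≥ θ‖ε′ − ε″‖_e² for all ε′, ε″ ∈ ℝᵈ and all e. Then for each f ∈ ℝⁿ the solution u* of the problem Σ_e w_e σ̂_e(B_e u*)·(B_e v) = f·v for all v ∈ ℝⁿ is unique. -/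
open Matrix

/-! Test the difference of the two weak equations with `v = u₁ - u₂`: the load cancels, so strong
monotonicity of the material laws bounds the strain energy of `u₁ - u₂` by zero, and structural
stability leaves only `u₁ = u₂`. -/

section WeakForm

variable {R V ι : Type*} {κ : ι → Type*} [CommRing R] [AddCommGroup V] [Module R V]
  [Fintype ι] [∀ e, Fintype (κ e)]

/-- The work of the stresses `σ e (B e u)` at the displacement `u` on the strains of the virtual
displacement `v`, i.e. the left-hand side of the weak equation. The strain space `κ e → R` may
depend on the component `e`. -/
def virtualWork (w : ι → R) (σ : ∀ e, (κ e → R) → (κ e → R)) (B : ∀ e, V →ₗ[R] (κ e → R))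
    (u v : V) : R :=
  ∑ e, w e * (σ e (B e u) ⬝ᵥ B e v)

/-- The (doubled) strain energy `∑ₑ wₑ ‖Bₑ u‖ₑ²`, in which `‖x‖ₑ²` is encoded as the quadratic
form `𝔹 e *ᵥ x ⬝ᵥ x` of an arbitrary square matrix. -/
def strainEnergy (w : ι → R) (𝔹 : ∀ e, Matrix (κ e) (κ e) R) (B : ∀ e, V →ₗ[R] (κ e → R))
    (u : V) : R :=
  ∑ e, w e * (𝔹 e *ᵥ B e u ⬝ᵥ B e u)

theorem virtualWork_sub_virtualWork (w : ι → R) (σ : ∀ e, (κ e → R) → (κ e → R))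
    (B : ∀ e, V →ₗ[R] (κ e → R)) (u₁ u₂ v : V) :
    virtualWork w σ B u₁ v - virtualWork w σ B u₂ v =
      ∑ e, w e * ((σ e (B e u₁) - σ e (B e u₂)) ⬝ᵥ B e v) := by
  simp only [virtualWork, sub_dotProduct, mul_sub, Finset.sum_sub_distrib]

variable [LinearOrder R] [IsStrictOrderedRing R]
  {w : ι → R} {𝔹 : ∀ e, Matrix (κ e) (κ e) R} {σ : ∀ e, (κ e → R) → (κ e → R)}
  {B : ∀ e, V →ₗ[R] (κ e → R)} {θ : R}

theorem mul_strainEnergy_sub_le_virtualWork_sub (hw : ∀ e, 0 ≤ w e)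
    (hmono : ∀ e (ε' ε'' : κ e → R),
      θ * (𝔹 e *ᵥ (ε' - ε'') ⬝ᵥ (ε' - ε'')) ≤ (σ e ε' - σ e ε'') ⬝ᵥ (ε' - ε''))
    (u₁ u₂ : V) :
    θ * strainEnergy w 𝔹 B (u₁ - u₂) ≤
      virtualWork w σ B u₁ (u₁ - u₂) - virtualWork w σ B u₂ (u₁ - u₂) := by
  simp only [virtualWork_sub_virtualWork, strainEnergy, Finset.mul_sum, mul_left_comm θ, map_sub]
  gcongr with e
  · exact hw e
  · exact hmono e _ _

theorem eq_zero_of_dotProduct_self_le_mul {ν : Type*} [Fintype ν] {u : ν → R} {c s : R}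
    (hc : 0 ≤ c) (hu : u ⬝ᵥ u ≤ c * s) (hs : s ≤ 0) : u = 0 :=
  dotProduct_self_eq_zero.mp <| le_antisymm
    (hu.trans (mul_nonpos_of_nonneg_of_nonpos hc hs))
    (Finset.sum_nonneg fun i _ => mul_self_nonneg (u i))

theorem uniqueness_of_solutions_general (hw : ∀ e, 0 ≤ w e) (hθ : 0 < θ)
    (hmono : ∀ e (ε' ε'' : κ e → R),
      θ * (𝔹 e *ᵥ (ε' - ε'') ⬝ᵥ (ε' - ε'')) ≤ (σ e ε' - σ e ε'') ⬝ᵥ (ε' - ε''))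
    (hdef : ∀ u, strainEnergy w 𝔹 B u ≤ 0 → u = 0) {f : V → R} {u₁ u₂ : V}
    (h₁ : ∀ v, virtualWork w σ B u₁ v = f v) (h₂ : ∀ v, virtualWork w σ B u₂ v = f v) :
    u₁ = u₂ := by
  have energy_le : θ * strainEnergy w 𝔹 B (u₁ - u₂) ≤ 0 :=
    calc θ * strainEnergy w 𝔹 B (u₁ - u₂)
        ≤ virtualWork w σ B u₁ (u₁ - u₂) - virtualWork w σ B u₂ (u₁ - u₂) :=
          mul_strainEnergy_sub_le_virtualWork_sub hw hmono u₁ u₂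
      _ = 0 := by rw [h₁, h₂, sub_self]
  exact sub_eq_zero.mp (hdef _ (nonpos_of_mul_nonpos_right energy_le hθ))

end WeakForm

/-- **Uniqueness of solutions** of the effective displacement problem
`w Bᵀ σ̂(B u) = f` (in weak form), under material stability, structural
stability and strict monotonicity of the material laws.
The norm `‖·‖_e` on `ℝᵈ` is the one induced by the symmetric positive-definite
matrix `𝔹 e`, i.e. `‖x‖_e² = (𝔹 e) x ⬝ᵥ x`; norms on `ℝⁿ` are Euclidean. -/
theorem uniqueness_of_solutions (m d n : ℕ)
    (w : Fin m → ℝ) (hw : ∀ e, 0 < w e)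
    (𝔹 : Fin m → Matrix (Fin d) (Fin d) ℝ) (h𝔹 : ∀ e, (𝔹 e).PosDef)
    (σ : Fin m → (Fin d → ℝ) → (Fin d → ℝ)) (hσ : ∀ e, Continuous (σ e))
    (B : Fin m → (Fin n → ℝ) →ₗ[ℝ] (Fin d → ℝ))
    (a b : ℝ) (ha : 0 < a) (hb : 0 ≤ b)
    (hmat : ∀ e (ε : Fin d → ℝ), a * ((𝔹 e).mulVec ε ⬝ᵥ ε) - b ≤ σ e ε ⬝ᵥ ε)
    (c : ℝ) (hc : 0 < c)
    (hstruct : ∀ u : Fin n → ℝ,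
      u ⬝ᵥ u ≤ c * ∑ e, w e * ((𝔹 e).mulVec (B e u) ⬝ᵥ (B e u)))
    (θ : ℝ) (hθ : 0 < θ)
    (hmono : ∀ e (ε' ε'' : Fin d → ℝ),
      θ * ((𝔹 e).mulVec (ε' - ε'') ⬝ᵥ (ε' - ε'')) ≤
        (σ e ε' - σ e ε'') ⬝ᵥ (ε' - ε''))
    (f : Fin n → ℝ) :
    ∀ u₁ u₂ : Fin n → ℝ,
      (∀ v : Fin n → ℝ, ∑ e, w e * (σ e (B e u₁) ⬝ᵥ (B e v)) = f ⬝ᵥ v) →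
      (∀ v : Fin n → ℝ, ∑ e, w e * (σ e (B e u₂) ⬝ᵥ (B e v)) = f ⬝ᵥ v) →
      u₁ = u₂ := fun _ _ h₁ h₂ =>
  uniqueness_of_solutions_general (fun e => (hw e).le) hθ hmono
    (fun u => eq_zero_of_dotProduct_self_le_mul hc.le (hstruct u)) h₁ h₂
end

section
/- (Uniform approximation by point data.) Let w_e > 0 and let σ̂_e : ℝᵈ → ℝᵈ be continuous, satisfy material stability σ̂_e(ε)·ε ≥ a‖ε‖_e² − b (a > 0, b ≥ 0), and be locally Lipschitz: for each R > 0 there is L_R > 0 with ‖σ̂_e(ε) − σ̂_e(ε′)‖_e ≤ L_R‖ε − ε′‖_e whenever ‖ε‖_e, ‖ε′‖_e < R. Let B_e : ℝⁿ → ℝᵈ be linear with ‖u‖² ≤ c Σ_e w_e‖B_e u‖_e². Let G_e = {(ε, σ̂_e(ε)) : ε ∈ ℝᵈ} and, for each h ∈ ℕ, let D_{e,h} ⊂ ℝᵈ × ℝᵈ be a finite nonempty set. Assume there are sequences t_h → 0, ρ_h → 0, δ_h → 0, R_h → ∞ with: (1) every y ∈ D_{e,h} satisfies ‖y − z‖_{Z_e}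 < t_h for some z ∈ G_e; (2) for every ε with ‖ε‖_e ≤ 2R_h there is y ∈ D_{e,h} with ‖(ε, σ̂_e(ε)) − y‖_{Z_e} < ρ_h; (3) L_{2R_h}(t_h + ρ_h + δ_h) → 0. Fix a symmetric positive-definite matrix ℂ_e and define s_{e,h} : ℝᵈ → ℝᵈ by: for ‖ε‖_e < R_h, s_{e,h}(ε) = η_e where (ξ_e, η_e) ∈ D_{e,h} has ξ_e closest to ε among the data strains (any measurable choice); for ‖ε‖_e ≥ R_h, s_{e,h}(ε) = ℂ_e ε. Let σ̂_{e,h} = ψ_{δ_h} ∗ s_{e,h}, where ψ_δ ∈ C_c^∞(B_δ; [0,∞)) is an even mollification kernel with unit integral. Then for all sufficiently large h and every f ∈ ℝⁿ the problem Σ_e w_e σ̂_{e,h}(B_e u_h)·(B_e v) = f·v (for all v) has a solution u_h, and a subsequence of (u_h) converges to a solution u of the limiting problem Σ_e w_e σ̂_e(B_e u)·(B_e v) = f·v. If moreover each σ̂_e is strictly monotone, i.e. (σ̂_e(ε′) − σ̂_e(ε″))·(ε′ − ε″) ≥ θ‖ε′ − ε″‖_e² with θ > 0, then the limit solution u is unique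 and the whole sequence (u_h) converges to u. -/
open Matrix Filter Topology MeasureTheory

/-- The norm on local strain space `ℝᵈ` induced by a (symmetric positive-definite)
matrix `M`: `‖x‖ = √(Mx·x)`. -/
noncomputable def matNorm {d : ℕ} (M : Matrix (Fin d) (Fin d) ℝ) (x : Fin d → ℝ) : ℝ :=
  Real.sqrt (M.mulVec x ⬝ᵥ x)

/-- The local phase-space norm on `Z_e = ℝᵈ × ℝᵈ`:
`‖(ε,σ)‖² = Mε·ε + M⁻¹σ·σ`. -/
noncomputable def phaseNorm {d : ℕ} (M : Matrix (Fin d) (Fin d) ℝ)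
    (y : (Fin d → ℝ) × (Fin d → ℝ)) : ℝ :=
  Real.sqrt (M.mulVec y.1 ⬝ᵥ y.1 + M⁻¹.mulVec y.2 ⬝ᵥ y.2)

/-!
Averaging a law `s` against a probability kernel keeps every closed convex constraint that `s`
satisfies on the support of the kernel. Nearest-datum laws are uniformly close to the limiting law
at small strains and equal to a positive-definite linear law at large strains, so their averages
are coercive uniformly in `h` and converge continuously to the limiting law. Coercivity gives
solutions (a coercive continuous map of `ℝⁿ` is onto, by Brouwer) and an a priori bound on them;
compactness and continuous convergence then identify the limits of subsequences.

Brouwer's theorem enters through the absence of a `C¹` retraction `g` of the closed ball onto its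
sphere. The integral over the ball of the Jacobian of `x + t (g x - x)` is a polynomial in `t`; for
small `t` the map is a bijection of the ball, so the polynomial is constant and equal to the volume
of the ball, whereas at `t = 1` the Jacobian vanishes identically.
-/

section JacobianIntegral

variable {E : Type*} [NormedAddCommGroup E] [NormedSpace ℝ E]

theorem exists_mem_sphere_dist_le {c x y : E} {p : ℝ} (hx : dist x c ≤ p) (hy : p ≤ dist y c) :
    ∃ z ∈ Metric.sphere c p, dist x z ≤ dist x y := by
  have hcont : ContinuousOn (fun s : ℝ => dist (AffineMap.lineMap x y s) c) (Set.Icc 0 1) := by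
    fun_prop
  obtain ⟨s, ⟨hs₀, hs₁⟩, hs⟩ :=
    intermediate_value_Icc zero_le_one hcont (show p ∈ Set.Icc _ _ by simpa using ⟨hx, hy⟩)
  refine ⟨_, hs, ?_⟩
  rw [dist_left_lineMap, Real.norm_of_nonneg hs₀]
  exact mul_le_of_le_one_left dist_nonneg hs₁

theorem lipschitzWith_indicator_closedBall {F : Type*} [SeminormedAddCommGroup F] {f : E → F}
    {K : NNReal} {c : E} {p : ℝ} (hf : LipschitzOnWith K f (Metric.closedBall c p))
    (hf₀ : Set.EqOn f 0 (Metric.sphere c p)) :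
    LipschitzWith K ((Metric.closedBall c p).indicator f) := by
  set g := (Metric.closedBall c p).indicator f
  have g_eq {x} (hx : x ∈ Metric.closedBall c p) : g x = f x := Set.indicator_of_mem hx f
  have g_eq_zero {x} (hx : p ≤ dist x c) : g x = 0 := by
    rcases hx.eq_or_lt with h | h
    · rw [g_eq h.ge, hf₀ h.symm, Pi.zero_apply]
    · exact Set.indicator_of_notMem (by simpa using h) f
  have dist_le_of_crossing {x y} (hx : dist x c ≤ p) (hy : p ≤ dist y c) :
      dist (g x) (g y) ≤ K * dist x y := by
    obtain ⟨z, hz, hxz⟩ := exists_mem_sphere_dist_le hx hy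
    have hz' := Metric.sphere_subset_closedBall hz
    calc dist (g x) (g y) = dist (f x) (f z) := by
          rw [g_eq_zero hy, g_eq hx, hf₀ hz, Pi.zero_apply]
      _ ≤ K * dist x z := hf.dist_le_mul x hx z hz'
      _ ≤ K * dist x y := by gcongr
  refine LipschitzWith.of_dist_le_mul fun x y => ?_
  rcases le_total (dist x c) p with hx | hx <;> rcases le_total (dist y c) p with hy | hy
  · rw [g_eq hx, g_eq hy]
    exact hf.dist_le_mul x hx y hy
  · exact dist_le_of_crossing hx hy
  · rw [dist_comm (g x), dist_comm x]
    exact dist_le_of_crossing hy hx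
  · rw [g_eq_zero hx, g_eq_zero hy, dist_self]
    positivity

theorem bijective_id_add_of_lipschitzWith [CompleteSpace E] {k : E → E} {K : NNReal}
    (hk : LipschitzWith K k) (hK : K < 1) : Function.Bijective (fun x => x + k x) := by
  have happrox : ApproximatesLinearOn (fun x => x + k x)
      ((ContinuousLinearEquiv.refl ℝ E : E ≃L[ℝ] E) : E →L[ℝ] E) Set.univ K := by
    intro x _ y _
    simpa [add_sub_add_comm] using hk.norm_sub_le x y
  have hK' : Subsingleton E ∨
      K < ‖((ContinuousLinearEquiv.refl ℝ E).symm : E →L[ℝ] E)‖₊⁻¹ := by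
    rcases subsingleton_or_nontrivial E with hE | hE
    · exact Or.inl hE
    · exact Or.inr (by simpa using hK)
  exact ⟨Set.injOn_univ.1 (happrox.injOn hK'), happrox.surjective hK'⟩

theorem bijOn_closedBall_id_add [CompleteSpace E] {k : E → E} {K : NNReal} {c : E} {p : ℝ}
    (hk : LipschitzOnWith K k (Metric.closedBall c p)) (hK : K < 1)
    (hk₀ : Set.EqOn k 0 (Metric.sphere c p)) :
    Set.BijOn (fun x => x + k x) (Metric.closedBall c p) (Metric.closedBall c p) := by
  set S := Metric.closedBall c p
  set g : E → E := fun x => x + S.indicator k x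
  have hg : Function.Bijective g :=
    bijective_id_add_of_lipschitzWith (lipschitzWith_indicator_closedBall hk hk₀) hK
  have g_compl {x} (hx : x ∉ S) : g x = x := by simp [g, hx]
  have maps_compl : Set.MapsTo g Sᶜ Sᶜ := fun x hx => by rwa [g_compl hx]
  have maps : Set.MapsTo g S S := by
    intro x hx
    by_contra hgx
    have hfix : g x = x := hg.1 (g_compl hgx)
    exact hgx (hfix.symm ▸ hx)
  have surj : Set.SurjOn g S S := by
    intro y hy
    obtain ⟨x, rfl⟩ := hg.2 y
    exact ⟨x, not_not.1 fun hx => maps_compl hx hy, rfl⟩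
  refine Set.BijOn.congr ⟨maps, hg.1.injOn, surj⟩ fun x hx => ?_
  simp only [g, Set.indicator_of_mem hx]

variable [FiniteDimensional ℝ E]

theorem exists_polynomial_eval_eq_det_one_add_smul_s4 (A : E →L[ℝ] E) :
    ∃ P : Polynomial ℝ, P.natDegree ≤ Module.finrank ℝ E ∧
      ∀ s : ℝ, P.eval s = (1 + s • A).det := by
  let b := Module.finBasis ℝ E
  let M := LinearMap.toMatrix b b (A : E →ₗ[ℝ] E)
  refine ⟨Matrix.det ((Polynomial.X : Polynomial ℝ) • M.map Polynomial.C +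
    (1 : Matrix _ _ ℝ).map Polynomial.C), ?_, fun s => ?_⟩
  · simpa using Polynomial.natDegree_det_X_add_C_le M 1
  · have hM : LinearMap.toMatrix b b ((1 + s • A : E →L[ℝ] E) : E →ₗ[ℝ] E) = s • M + 1 := by
      have hcoe : ((1 + s • A : E →L[ℝ] E) : E →ₗ[ℝ] E) = s • (A : E →ₗ[ℝ] E) + LinearMap.id := by
        ext x
        simp [add_comm]
      rw [hcoe]
      simp [M]
    rw [ContinuousLinearMap.det, ← LinearMap.det_toMatrix b, hM,
      ← Polynomial.coe_evalRingHom, RingHom.map_det]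
    congr 1
    ext i j
    rcases eq_or_ne i j with rfl | hij
    · simp [mul_comm s]
    · simp [hij, mul_comm s]

theorem exists_finset_weights_det_one_add {t : ℝ} (ht : 0 < t) :
    ∃ (T : Finset ℝ) (c : ℝ → ℝ), (T : Set ℝ) ⊆ Set.Ioo 0 t ∧ ∑ s ∈ T, c s = 1 ∧
      ∀ A : E →L[ℝ] E, (1 + A).det = ∑ s ∈ T, c s * (1 + s • A).det := by
  obtain ⟨T, hTsub, hTcard⟩ :=
    (Set.Ioo_infinite ht).exists_subset_card_eq (Module.finrank ℝ E + 1)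
  have hT : T.Nonempty := Finset.card_pos.1 (by lia)
  refine ⟨T, fun s => (Lagrange.basis T id s).eval 1, hTsub, ?_, fun A => ?_⟩
  · rw [← Polynomial.eval_finsetSum, Lagrange.sum_basis Function.injective_id.injOn hT,
      Polynomial.eval_one]
  · obtain ⟨P, hPdeg, hP⟩ := exists_polynomial_eval_eq_det_one_add_smul_s4 A
    have hdeg : P.degree < T.card :=
      (Polynomial.degree_le_of_natDegree_le hPdeg).trans_lt
        (by rw [hTcard]; exact_mod_cast lt_add_one _)
    have hinterp := Lagrange.eq_interpolate (s := T) (v := id) Function.injective_id.injOn hdeg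
    calc (1 + A).det = P.eval 1 := by rw [hP, one_smul]
      _ = ∑ s ∈ T, (Lagrange.basis T id s).eval 1 * P.eval s := by
        conv_lhs => rw [hinterp, Lagrange.interpolate_apply, Polynomial.eval_finsetSum]
        simp only [id, Polynomial.eval_mul, Polynomial.eval_C, mul_comm]
      _ = _ := by simp only [hP]

variable [MeasurableSpace E] [BorelSpace E] (μ : Measure E) [μ.IsAddHaarMeasure]

theorem setIntegral_closedBall_det_one_add_fderiv {k : E → E} (hk : ContDiff ℝ 1 k) {K : NNReal}
    {c : E} {p : ℝ} (hk₀ : Set.EqOn k 0 (Metric.sphere c p))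
    (hlip : LipschitzOnWith K k (Metric.closedBall c p)) (hK : K < 1)
    (hdet : ∀ x ∈ Metric.closedBall c p, 0 < (1 + fderiv ℝ k x).det) :
    ∫ x in Metric.closedBall c p, (1 + fderiv ℝ k x).det ∂μ =
      μ.real (Metric.closedBall c p) := by
  set S := Metric.closedBall c p
  have hbij : Set.BijOn (fun x => x + k x) S S := bijOn_closedBall_id_add hlip hK hk₀
  have hderiv (x) (_ : x ∈ S) : HasFDerivWithinAt (fun x => x + k x) (1 + fderiv ℝ k x) S x :=
    ((hasFDerivAt_id x).add (hk.differentiable one_ne_zero x).hasFDerivAt).hasFDerivWithinAt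
  have hchange := integral_image_eq_integral_abs_det_fderiv_smul μ
    measurableSet_closedBall hderiv hbij.injOn (fun _ => (1 : ℝ))
  rw [hbij.image_eq, setIntegral_const, smul_eq_mul, mul_one] at hchange
  rw [hchange]
  refine setIntegral_congr_fun measurableSet_closedBall fun x hx => ?_
  simp [abs_of_pos (hdet x hx)]

theorem exists_pos_forall_setIntegral_det_one_add_smul {k : E → E} (hk : ContDiff ℝ 1 k)
    {c : E} {p : ℝ} (hk₀ : Set.EqOn k 0 (Metric.sphere c p)) :
    ∃ t > (0 : ℝ), ∀ s ∈ Set.Ioo 0 t,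
      ∫ x in Metric.closedBall c p, (1 + s • fderiv ℝ k x).det ∂μ =
        μ.real (Metric.closedBall c p) := by
  have hS : IsCompact (Metric.closedBall c p) := isCompact_closedBall c p
  obtain ⟨K, hK⟩ := hk.contDiffOn.exists_lipschitzOnWith one_ne_zero (convex_closedBall c p) hS
  have hdet : ∀ᶠ s in 𝓝 (0 : ℝ), ∀ x ∈ Metric.closedBall c p, 0 < (1 + s • fderiv ℝ k x).det := by
    have hcont : Continuous fun q : ℝ × E => (1 + q.1 • fderiv ℝ k q.2).det :=
      ContinuousLinearMap.continuous_det.comp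
        (continuous_const.add (continuous_fst.smul
          ((hk.continuous_fderiv one_ne_zero).comp continuous_snd)))
    refine hS.eventually_forall_of_forall_eventually fun x _ =>
      hcont.continuousAt.eventually (lt_mem_nhds ?_)
    simp [ContinuousLinearMap.det]
  have hcontract : ∀ᶠ s in 𝓝 (0 : ℝ), ‖s‖₊ * K < 1 :=
    (continuous_nnnorm.mul continuous_const).continuousAt.eventually (gt_mem_nhds (by simp))
  obtain ⟨t, ht, hball⟩ := Metric.eventually_nhds_iff.1 (hdet.and hcontract)
  refine ⟨t, ht, fun s hs => ?_⟩
  obtain ⟨hpos, hsK⟩ := hball (y := s) (by simpa [abs_of_pos hs.1] using hs.2)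
  have hfderiv (x) : fderiv ℝ (s • k) x = s • fderiv ℝ k x :=
    fderiv_const_smul (hk.differentiable one_ne_zero x) s
  simp only [← hfderiv] at hpos ⊢
  exact setIntegral_closedBall_det_one_add_fderiv μ (hk.const_smul s)
    (fun x hx => by simp [hk₀ hx]) ((lipschitzWith_smul s).comp_lipschitzOnWith hK) hsK hpos

theorem setIntegral_closedBall_det_fderiv {g : E → E} (hg : ContDiff ℝ 1 g) {c : E} {p : ℝ}
    (hid : Set.EqOn g id (Metric.sphere c p)) :
    ∫ x in Metric.closedBall c p, (fderiv ℝ g x).det ∂μ = μ.real (Metric.closedBall c p) := by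
  set S := Metric.closedBall c p
  set k : E → E := fun x => g x - x
  have hk : ContDiff ℝ 1 k := hg.sub contDiff_id
  have hfderiv (x) : fderiv ℝ g x = 1 + fderiv ℝ k x := by
    rw [fderiv_fun_sub (hg.differentiable one_ne_zero x) differentiableAt_fun_id, fderiv_fun_id]
    exact (add_sub_cancel _ _).symm
  obtain ⟨t, ht, hvol⟩ := exists_pos_forall_setIntegral_det_one_add_smul μ hk
    (c := c) (p := p) fun x hx => sub_eq_zero.2 (hid hx)
  obtain ⟨T, w, hT, hw, hdet⟩ := exists_finset_weights_det_one_add (E := E) ht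
  have hint (s : ℝ) : IntegrableOn (fun x => (1 + s • fderiv ℝ k x).det) S μ :=
    (ContinuousLinearMap.continuous_det.comp (continuous_const.add
      ((hk.continuous_fderiv one_ne_zero).const_smul s))).continuousOn.integrableOn_compact
      (isCompact_closedBall c p)
  calc ∫ x in S, (fderiv ℝ g x).det ∂μ
      = ∫ x in S, ∑ s ∈ T, w s * (1 + s • fderiv ℝ k x).det ∂μ := by
        congr with x
        rw [hfderiv, hdet]
    _ = ∑ s ∈ T, w s * ∫ x in S, (1 + s • fderiv ℝ k x).det ∂μ := by
        rw [integral_finsetSum _ fun s _ => (hint s).const_mul _]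
        simp only [integral_const_mul]
    _ = ∑ s ∈ T, w s * μ.real S := Finset.sum_congr rfl fun s hs => by rw [hvol s (hT hs)]
    _ = μ.real S := by rw [← Finset.sum_mul, hw, one_mul]

end JacobianIntegral

section SphereRetraction

variable {E : Type*} [NormedAddCommGroup E] [InnerProductSpace ℝ E] [FiniteDimensional ℝ E]

theorem det_fderiv_eq_zero_of_norm_eq {g : E → E} {p : ℝ} (hp : p ≠ 0) (hg : ∀ x, ‖g x‖ = p)
    {x : E} (hgx : DifferentiableAt ℝ g x) : (fderiv ℝ g x).det = 0 := by
  by_contra hdet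
  obtain ⟨v, hv⟩ : ∃ v, fderiv ℝ g x v = g x :=
    (LinearMap.equivOfDetNeZero _ hdet).surjective (g x)
  have hconst : HasFDerivAt (fun y => ‖g y‖ ^ 2) (0 : E →L[ℝ] ℝ) x := by
    simpa only [hg] using hasFDerivAt_const (p ^ 2) x
  have hderiv := DFunLike.congr_fun (hgx.hasFDerivAt.norm_sq.unique hconst) v
  simp [hv, hg, hp] at hderiv

theorem not_contDiff_retraction_sphere {g : E → E} {p : ℝ} (hp : 0 < p) (hg : ∀ x, ‖g x‖ = p)
    (hid : Set.EqOn g id (Metric.sphere 0 p)) : ¬ ContDiff ℝ 1 g := by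
  borelize E
  intro hsmooth
  have hvol := setIntegral_closedBall_det_fderiv volume hsmooth hid
  simp only [det_fderiv_eq_zero_of_norm_eq hp.ne' hg (hsmooth.differentiable one_ne_zero _),
    integral_zero] at hvol
  exact (ENNReal.toReal_pos (Metric.measure_closedBall_pos volume (0 : E) hp).ne'
    measure_closedBall_lt_top.ne).ne hvol

theorem exists_eq_zero_of_eq_id_of_le_norm {F : E → E} (hF : Continuous F) {p : ℝ} (hp : 0 < p)
    (hid : ∀ x, p ≤ ‖x‖ → F x = x) : ∃ x, F x = 0 := by
  by_contra! hne
  have hsmooth : ContDiffOn ℝ 1 F {x | p < ‖x‖} :=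
    contDiffOn_id.congr fun x hx => hid x (le_of_lt hx)
  have hnhds : {x : E | p < ‖x‖} ∈ 𝓝ˢ {x : E | 2 * p ≤ ‖x‖} :=
    (isOpen_lt continuous_const continuous_norm).mem_nhdsSet.2 <| by
      intro x hx
      exact (show p < 2 * p by linarith).trans_le hx
  obtain ⟨G, hG, hGF, hGid, -⟩ := hF.exists_contDiff_approx_and_eqOn 1 hF.norm
    (fun x => norm_pos_iff.2 (hne x)) (isClosed_le continuous_const continuous_norm) hnhds hsmooth
  have hG₀ (x) : G x ≠ 0 := fun h => by simpa [h] using hGF x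
  have hG₀' (x) : ‖G x‖ ≠ 0 := norm_ne_zero_iff.2 (hG₀ x)
  refine not_contDiff_retraction_sphere (g := fun x => (2 * p) • ‖G x‖⁻¹ • G x) (p := 2 * p)
    (by linarith) (fun x => ?_) (fun x hx => ?_)
    (contDiff_const.smul (((hG.norm ℝ hG₀).inv hG₀').smul hG))
  · rw [norm_smul_of_nonneg (by linarith), norm_smul, norm_inv, norm_norm,
      inv_mul_cancel₀ (hG₀' x), mul_one]
  · have hx : ‖x‖ = 2 * p := mem_sphere_zero_iff_norm.1 hx
    have hGx : G x = x := (hGid hx.ge).trans (hid x (by linarith))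
    simp only [hGx, hx, id]
    exact smul_inv_smul₀ (by linarith) x

theorem exists_eq_zero_of_inner_pos {F : E → E} (hF : Continuous F) {q : ℝ} (hq : 0 < q)
    (hpos : ∀ x, q ≤ ‖x‖ → 0 < inner ℝ (F x) x) : ∃ x, F x = 0 := by
  let χ : ContDiffBump (0 : E) := ⟨q, 2 * q, hq, by linarith⟩
  obtain ⟨x, hx⟩ : ∃ x, χ x • F x + (1 - χ x) • x = 0 := by
    refine exists_eq_zero_of_eq_id_of_le_norm (p := 2 * q)
      ((χ.continuous.smul hF).add ((continuous_const.sub χ.continuous).smul continuous_id))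
      (by linarith) fun x hx => ?_
    have hχ : χ x = 0 := χ.zero_of_le_dist (by simpa using hx)
    simp [hχ]
  rcases le_total ‖x‖ q with hxq | hxq
  · have hχ : χ x = 1 := χ.one_of_mem_closedBall (by simpa using hxq)
    exact ⟨x, by simpa [hχ] using hx⟩
  · have hblend : χ x * inner ℝ (F x) x + (1 - χ x) * ‖x‖ ^ 2 = 0 := by
      rw [← real_inner_self_eq_norm_sq, ← real_inner_smul_left, ← real_inner_smul_left,
        ← inner_add_left, hx, inner_zero_left]
    have hx₀ : 0 < ‖x‖ ^ 2 := pow_pos (hq.trans_le hxq) 2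
    rcases (χ.nonneg (x := x)).eq_or_lt with hχ | hχ
    · rw [← hχ] at hblend
      linarith
    · nlinarith [mul_pos hχ (hpos x hxq), mul_nonneg (sub_nonneg.2 (χ.le_one (x := x))) hx₀.le]

end SphereRetraction

section Coercive

variable {E : Type*} [NormedAddCommGroup E] [InnerProductSpace ℝ E]

theorem norm_le_of_mul_norm_sq_sub_le_inner {f x : E} {κ β : ℝ} (hκ : 0 < κ)
    (h : κ * ‖x‖ ^ 2 - β ≤ inner ℝ f x) : ‖x‖ ≤ max 1 ((‖f‖ + |β|) / κ) := by
  by_contra! hlt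
  obtain ⟨hx₁, hx⟩ := max_lt_iff.1 hlt
  rw [div_lt_iff₀ hκ] at hx
  have hfx : inner ℝ f x ≤ ‖f‖ * ‖x‖ := real_inner_le_norm f x
  nlinarith [le_abs_self β, abs_nonneg β]

variable [FiniteDimensional ℝ E]

theorem surjective_of_coercive_inner {F : E → E} (hF : Continuous F) {κ β : ℝ} (hκ : 0 < κ)
    (hcoer : ∀ x, κ * ‖x‖ ^ 2 - β ≤ inner ℝ (F x) x) : Function.Surjective F := by
  intro f
  set r := max 1 ((‖f‖ + |β|) / κ)
  obtain ⟨x, hx⟩ := exists_eq_zero_of_inner_pos (hF.sub continuous_const) (F := fun x => F x - f)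
    (q := r + 1) (by positivity) fun x hx => by
      by_contra! hle
      rw [inner_sub_left, sub_nonpos] at hle
      linarith [norm_le_of_mul_norm_sq_sub_le_inner hκ ((hcoer x).trans hle)]
  exact ⟨x, sub_eq_zero.1 hx⟩

end Coercive

section DotProduct

variable {ν : Type*} [Fintype ν]

theorem inner_toLp_eq_dotProduct (x y : ν → ℝ) :
    inner ℝ (WithLp.toLp 2 x) (WithLp.toLp 2 y) = x ⬝ᵥ y := by
  rw [EuclideanSpace.inner_toLp_toLp, star_trivial, dotProduct_comm]

theorem norm_toLp_sq_eq_dotProduct (x : ν → ℝ) : ‖WithLp.toLp 2 x‖ ^ 2 = x ⬝ᵥ x := by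
  rw [← real_inner_self_eq_norm_sq, inner_toLp_eq_dotProduct]

theorem norm_le_norm_toLp (x : ν → ℝ) : ‖x‖ ≤ ‖WithLp.toLp 2 x‖ :=
  (pi_norm_le_iff_of_nonneg (norm_nonneg _)).2 fun i => PiLp.norm_apply_le (WithLp.toLp 2 x) i

theorem surjective_of_coercive_dotProduct {F : (ν → ℝ) → ν → ℝ} (hF : Continuous F) {κ β : ℝ}
    (hκ : 0 < κ) (hcoer : ∀ u, κ * (u ⬝ᵥ u) - β ≤ F u ⬝ᵥ u) : Function.Surjective F := by
  let F₂ (x : EuclideanSpace ℝ ν) : EuclideanSpace ℝ ν := WithLp.toLp 2 (F (WithLp.ofLp x))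
  have hcoer₂ (x) : κ * ‖x‖ ^ 2 - β ≤ inner ℝ (F₂ x) x := by
    obtain ⟨u, rfl⟩ := WithLp.toLp_surjective 2 x
    rw [norm_toLp_sq_eq_dotProduct, inner_toLp_eq_dotProduct]
    exact hcoer u
  intro f
  obtain ⟨x, hx⟩ := surjective_of_coercive_inner (by fun_prop) hκ hcoer₂ (WithLp.toLp 2 f)
  exact ⟨WithLp.ofLp x, WithLp.toLp_injective 2 hx⟩

theorem norm_le_of_mul_sub_le_dotProduct {f u : ν → ℝ} {κ β : ℝ} (hκ : 0 < κ)
    (h : κ * (u ⬝ᵥ u) - β ≤ f ⬝ᵥ u) : ‖u‖ ≤ max 1 ((‖WithLp.toLp 2 f‖ + |β|) / κ) := by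
  rw [← norm_toLp_sq_eq_dotProduct, ← inner_toLp_eq_dotProduct] at h
  exact (norm_le_norm_toLp u).trans (norm_le_of_mul_norm_sq_sub_le_inner hκ h)

end DotProduct

section ContinuousConvergence

variable {X Y : Type*} [PseudoMetricSpace X] [ProperSpace X] [TopologicalSpace Y] [T2Space Y]
  {F : ℕ → X → Y} {G : X → Y} {f : Y} {u : ℕ → X} {S : Set X}

theorem exists_subseq_tendsto_solution
    (hFG : ∀ x, Tendsto (Function.uncurry F) (atTop ×ˢ 𝓝 x) (𝓝 (G x)))
    (hS : Bornology.IsBounded S) (huS : ∀ᶠ h in atTop, u h ∈ S)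
    (hu : ∀ᶠ h in atTop, F h (u h) = f) :
    ∃ φ : ℕ → ℕ, StrictMono φ ∧ ∃ x, Tendsto (u ∘ φ) atTop (𝓝 x) ∧ G x = f := by
  obtain ⟨x, -, φ, hφ, hux⟩ := tendsto_subseq_of_frequently_bounded hS huS.frequently
  have hF : Tendsto (fun k => F (φ k) (u (φ k))) atTop (𝓝 (G x)) :=
    (hFG x).comp (hφ.tendsto_atTop.prodMk hux)
  have hf : Tendsto (fun k => F (φ k) (u (φ k))) atTop (𝓝 f) :=
    tendsto_const_nhds.congr' ((hφ.tendsto_atTop.eventually hu).mono fun _ => Eq.symm)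
  exact ⟨φ, hφ, x, hux, tendsto_nhds_unique hF hf⟩

theorem tendsto_of_injective_of_tendsto_uncurry
    (hFG : ∀ x, Tendsto (Function.uncurry F) (atTop ×ˢ 𝓝 x) (𝓝 (G x)))
    (hS : Bornology.IsBounded S) (huS : ∀ᶠ h in atTop, u h ∈ S)
    (hu : ∀ᶠ h in atTop, F h (u h) = f) (hG : Function.Injective G) {x : X} (hx : G x = f) :
    Tendsto u atTop (𝓝 x) := by
  refine tendsto_of_subseq_tendsto fun ns hns => ?_
  obtain ⟨φ, -, y, huy, hy⟩ := exists_subseq_tendsto_solution (F := F ∘ ns) (u := u ∘ ns)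
    (fun z => (hFG z).comp (hns.prodMap tendsto_id)) hS (hns.eventually huS) (hns.eventually hu)
  rw [← hG (hy.trans hx.symm)]
  exact ⟨φ, huy⟩

end ContinuousConvergence

theorem exists_solution_and_tendsto_of_coercive {ν : Type*} [Fintype ν]
    {F : ℕ → (ν → ℝ) → ν → ℝ} {G : (ν → ℝ) → ν → ℝ} {κ β : ℝ} (hκ : 0 < κ)
    (hF : ∀ᶠ h in atTop, Continuous (F h))
    (hcoer : ∀ᶠ h in atTop, ∀ u, κ * (u ⬝ᵥ u) - β ≤ F h u ⬝ᵥ u)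
    (hFG : ∀ u, Tendsto (Function.uncurry F) (atTop ×ˢ 𝓝 u) (𝓝 (G u))) :
    ∃ H : ℕ, ∀ f, (∀ h, H ≤ h → ∃ u, F h u = f) ∧
      ∀ u : ℕ → ν → ℝ, (∀ h, H ≤ h → F h (u h) = f) →
        (∃ φ : ℕ → ℕ, StrictMono φ ∧ ∃ ustar, Tendsto (u ∘ φ) atTop (𝓝 ustar) ∧ G ustar = f) ∧
        (Function.Injective G →
          ∃ ustar, G ustar = f ∧ (∀ u', G u' = f → u' = ustar) ∧ Tendsto u atTop (𝓝 ustar)) := by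
  obtain ⟨H, hH⟩ := eventually_atTop.1 (hF.and hcoer)
  refine ⟨H, fun f => ⟨fun h hh => ?_, fun u hu => ?_⟩⟩
  · exact surjective_of_coercive_dotProduct (hH h hh).1 hκ (hH h hh).2 f
  have hu' : ∀ᶠ h in atTop, F h (u h) = f := eventually_atTop.2 ⟨H, hu⟩
  have hbound : ∀ᶠ h in atTop,
      u h ∈ Metric.closedBall 0 (max 1 ((‖WithLp.toLp 2 f‖ + |β|) / κ)) := by
    filter_upwards [hcoer, hu'] with h hcoer hu
    exact mem_closedBall_zero_iff.2 (norm_le_of_mul_sub_le_dotProduct hκ (hu ▸ hcoer (u h)))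
  have hsub := exists_subseq_tendsto_solution hFG Metric.isBounded_closedBall hbound hu'
  refine ⟨hsub, fun hG => ?_⟩
  obtain ⟨-, -, x, -, hx⟩ := hsub
  exact ⟨x, hx, fun u' hu' => hG (hu'.trans hx.symm), tendsto_of_injective_of_tendsto_uncurry hFG
    Metric.isBounded_closedBall hbound hu' hG hx⟩

section InternalForce

variable {ι ν κ : Type*} [Fintype ι] [Fintype ν] [DecidableEq ν] [Fintype κ]
  {w : ι → ℝ} {B : ι → (ν → ℝ) →ₗ[ℝ] κ → ℝ} {τ : ι → (κ → ℝ) → κ → ℝ}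

/-- The nodal forces `∑ₑ wₑ Bₑᵀ τₑ(Bₑ u)` that balance the stresses of the material laws `τₑ`
at the displacement `u`. -/
noncomputable def internalForce (w : ι → ℝ) (B : ι → (ν → ℝ) →ₗ[ℝ] κ → ℝ)
    (τ : ι → (κ → ℝ) → κ → ℝ) (u : ν → ℝ) : ν → ℝ :=
  ∑ e, w e • ((LinearMap.toMatrix' (B e))ᵀ *ᵥ τ e (B e u))

theorem internalForce_dotProduct (u v : ν → ℝ) :
    internalForce w B τ u ⬝ᵥ v = ∑ e, w e * (τ e (B e u) ⬝ᵥ B e v) := by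
  simp only [internalForce, sum_dotProduct, smul_dotProduct, smul_eq_mul, mulVec_transpose,
    ← dotProduct_mulVec, LinearMap.toMatrix'_mulVec]

theorem internalForce_eq_iff {u f : ν → ℝ} :
    internalForce w B τ u = f ↔ ∀ v, ∑ e, w e * (τ e (B e u) ⬝ᵥ B e v) = f ⬝ᵥ v := by
  simp only [← internalForce_dotProduct, dotProduct_eq_iff]

theorem continuous_internalForce (hτ : ∀ e, Continuous (τ e)) :
    Continuous (internalForce w B τ) := by
  have hB (e) : Continuous (B e) := (B e).continuous_of_finiteDimensional
  unfold internalForce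
  fun_prop

theorem tendsto_uncurry_internalForce {τh : ℕ → ι → (κ → ℝ) → κ → ℝ}
    (hτ : ∀ e ε, Tendsto (fun p : ℕ × (κ → ℝ) => τh p.1 e p.2) (atTop ×ˢ 𝓝 ε) (𝓝 (τ e ε)))
    (u : ν → ℝ) : Tendsto (Function.uncurry fun h => internalForce w B (τh h)) (atTop ×ˢ 𝓝 u)
      (𝓝 (internalForce w B τ u)) := by
  refine tendsto_finsetSum _ fun e _ => Tendsto.const_smul ?_ _
  have hB : Tendsto (B e) (𝓝 u) (𝓝 (B e u)) := (B e).continuous_of_finiteDimensional.tendsto u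
  exact ((continuous_const.matrix_mulVec continuous_id).tendsto _).comp
    ((hτ e (B e u)).comp (tendsto_id.prodMap hB))

variable {q : ι → (κ → ℝ) → ℝ} {c : ℝ}

theorem coercive_internalForce (hw : ∀ e, 0 ≤ w e) (hc : 0 < c)
    (hstruct : ∀ u, u ⬝ᵥ u ≤ c * ∑ e, w e * q e (B e u)) {α : ℝ} (hα : 0 ≤ α) {β : ι → ℝ}
    (hτ : ∀ e ε, α * q e ε - β e ≤ τ e ε ⬝ᵥ ε) (u : ν → ℝ) :
    α / c * (u ⬝ᵥ u) - ∑ e, w e * β e ≤ internalForce w B τ u ⬝ᵥ u := by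
  calc α / c * (u ⬝ᵥ u) - ∑ e, w e * β e
      ≤ α / c * (c * ∑ e, w e * q e (B e u)) - ∑ e, w e * β e := by gcongr; exact hstruct u
    _ = ∑ e, w e * (α * q e (B e u) - β e) := by
      rw [← mul_assoc, div_mul_cancel₀ _ hc.ne', Finset.mul_sum, ← Finset.sum_sub_distrib]
      exact Finset.sum_congr rfl fun e _ => by ring
    _ ≤ ∑ e, w e * (τ e (B e u) ⬝ᵥ B e u) :=
      Finset.sum_le_sum fun e _ => mul_le_mul_of_nonneg_left (hτ e _) (hw e)
    _ = internalForce w B τ u ⬝ᵥ u := (internalForce_dotProduct u u).symm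

theorem injective_internalForce (hw : ∀ e, 0 ≤ w e) (hc : 0 < c)
    (hstruct : ∀ u, u ⬝ᵥ u ≤ c * ∑ e, w e * q e (B e u)) {θ : ℝ} (hθ : 0 < θ)
    (hmono : ∀ e ε' ε'', θ * q e (ε' - ε'') ≤ (τ e ε' - τ e ε'') ⬝ᵥ (ε' - ε'')) :
    Function.Injective (internalForce w B τ) := by
  intro u' u'' heq
  have hsum : θ * ∑ e, w e * q e (B e (u' - u'')) ≤ 0 := by
    calc θ * ∑ e, w e * q e (B e (u' - u''))
        = ∑ e, w e * (θ * q e (B e u' - B e u'')) := by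
          rw [Finset.mul_sum]
          exact Finset.sum_congr rfl fun e _ => by rw [map_sub]; ring
      _ ≤ ∑ e, w e * ((τ e (B e u') - τ e (B e u'')) ⬝ᵥ (B e u' - B e u'')) :=
        Finset.sum_le_sum fun e _ => mul_le_mul_of_nonneg_left (hmono e _ _) (hw e)
      _ = (internalForce w B τ u' - internalForce w B τ u'') ⬝ᵥ (u' - u'') := by
        simp only [sub_dotProduct, internalForce_dotProduct, map_sub, mul_sub,
          Finset.sum_sub_distrib]
      _ = 0 := by rw [heq, sub_self, zero_dotProduct]
  have hself : (u' - u'') ⬝ᵥ (u' - u'') ≤ 0 :=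
    (hstruct _).trans (mul_nonpos_of_nonneg_of_nonpos hc.le (nonpos_of_mul_nonpos_right hsum hθ))
  have hnonneg : 0 ≤ (u' - u'') ⬝ᵥ (u' - u'') := by
    rw [← norm_toLp_sq_eq_dotProduct]
    positivity
  exact sub_eq_zero.1 (dotProduct_self_eq_zero.1 (hself.antisymm hnonneg))

end InternalForce

section Convolution

open scoped Convolution

variable {E F : Type*} [NormedAddCommGroup E] [MeasurableSpace E] {μ : Measure E}
  [NormedAddCommGroup F] [NormedSpace ℝ F] [CompleteSpace F]

/-- Kernels for averaging over translates of `U`: continuous and nonnegative densities of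
probability measures, vanishing outside `U`. -/
structure IsMollifier (μ : Measure E) (U : Set E) (ψ : E → ℝ) : Prop where
  continuous : Continuous ψ
  support_subset : Function.support ψ ⊆ U
  nonneg : 0 ≤ ψ
  integral_eq_one : ∫ x, ψ x ∂μ = 1

namespace IsMollifier

variable {U : Set E} {ψ : E → ℝ}

theorem nonempty (hψ : IsMollifier μ U ψ) : U.Nonempty := by
  refine (Function.support_nonempty_iff.2 ?_).mono hψ.support_subset
  rintro rfl
  simpa using hψ.integral_eq_one

theorem hasCompactSupport [ProperSpace E] (hψ : IsMollifier μ U ψ) (hU : Bornology.IsBounded U) :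
    HasCompactSupport ψ :=
  Metric.isCompact_of_isClosed_isBounded (isClosed_tsupport ψ)
    (hU.subset hψ.support_subset).closure

theorem convolution_mem [OpensMeasurableSpace E] (hψ : IsMollifier μ U ψ) {g : E → F} {S : Set F}
    (hS : Convex ℝ S) (hSc : IsClosed S) {x : E}
    (hg : ConvolutionExistsAt ψ g x (.lsmul ℝ ℝ) μ) (hgS : ∀ y ∈ U, g (x - y) ∈ S) :
    (ψ ⋆[.lsmul ℝ ℝ, μ] g) x ∈ S := by
  let ψ' (y : E) : ENNReal := ENNReal.ofReal (ψ y)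
  have hψ' : Measurable ψ' := hψ.continuous.measurable.ennreal_ofReal
  have htop : ∀ᵐ y ∂μ, ψ' y < ⊤ := ae_of_all _ fun _ => ENNReal.ofReal_lt_top
  have hsmul (y) : (ψ' y).toReal • g (x - y) = ψ y • g (x - y) := by
    rw [ENNReal.toReal_ofReal (hψ.nonneg y)]
  have hprob : IsProbabilityMeasure (μ.withDensity ψ') := by
    refine ⟨?_⟩
    rw [withDensity_apply _ MeasurableSet.univ, Measure.restrict_univ,
      ← ofReal_integral_eq_lintegral_ofReal (integrable_of_integral_eq_one hψ.integral_eq_one)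
        (ae_of_all _ hψ.nonneg), hψ.integral_eq_one, ENNReal.ofReal_one]
  have hint : Integrable (fun y => g (x - y)) (μ.withDensity ψ') := by
    rw [integrable_withDensity_iff_integrable_smul' hψ' htop]
    simp only [hsmul]
    exact hg
  have hmem : ∀ᵐ y ∂μ.withDensity ψ', g (x - y) ∈ S := by
    rw [ae_withDensity_iff hψ']
    refine ae_of_all _ fun y hy => hgS y (hψ.support_subset ?_)
    rintro h
    simp [ψ', h] at hy
  have hconv : (ψ ⋆[.lsmul ℝ ℝ, μ] g) x = ∫ y, g (x - y) ∂μ.withDensity ψ' := by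
    rw [integral_withDensity_eq_integral_toReal_smul hψ' htop]
    simp only [hsmul, convolution, ContinuousLinearMap.lsmul_apply]
  exact hconv ▸ hS.integral_mem hSc hmem hint

end IsMollifier

end Convolution

section MatNorm

variable {d : ℕ} {M : Matrix (Fin d) (Fin d) ℝ}

theorem matNorm_nonneg (x : Fin d → ℝ) : 0 ≤ matNorm M x := Real.sqrt_nonneg _

theorem continuous_matNorm : Continuous (matNorm M) := by
  unfold matNorm
  fun_prop

theorem mulVec_dotProduct_self_nonneg (hM : M.PosSemidef) (x : Fin d → ℝ) :
    0 ≤ M *ᵥ x ⬝ᵥ x := by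
  simpa [dotProduct_comm] using hM.dotProduct_mulVec_nonneg x

theorem sq_matNorm (hM : M.PosSemidef) (x : Fin d → ℝ) : matNorm M x ^ 2 = M *ᵥ x ⬝ᵥ x :=
  Real.sq_sqrt (mulVec_dotProduct_self_nonneg hM x)

open scoped MatrixOrder in
theorem exists_matNorm_eq_norm_toLp_mulVec (hM : M.PosSemidef) :
    ∃ N : Matrix (Fin d) (Fin d) ℝ, ∀ x, matNorm M x = ‖WithLp.toLp 2 (N *ᵥ x)‖ := by
  obtain ⟨N, rfl⟩ := CStarAlgebra.nonneg_iff_eq_star_mul_self.1 hM.nonneg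
  refine ⟨N, fun x => ?_⟩
  rw [← Real.sqrt_sq (norm_nonneg (WithLp.toLp 2 (N *ᵥ x))), norm_toLp_sq_eq_dotProduct, matNorm,
    ← mulVec_mulVec, star_eq_conjTranspose, conjTranspose_eq_transpose_of_trivial,
    mulVec_transpose, ← dotProduct_mulVec]

theorem matNorm_add_le (hM : M.PosSemidef) (x y : Fin d → ℝ) :
    matNorm M (x + y) ≤ matNorm M x + matNorm M y := by
  obtain ⟨N, hN⟩ := exists_matNorm_eq_norm_toLp_mulVec hM
  simpa only [hN, mulVec_add, WithLp.toLp_add] using norm_add_le _ _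

theorem matNorm_sub_comm (x y : Fin d → ℝ) : matNorm M (x - y) = matNorm M (y - x) := by
  rw [matNorm, matNorm, ← neg_sub y x, mulVec_neg, neg_dotProduct_neg]

theorem matNorm_sub_le (hM : M.PosSemidef) (x y z : Fin d → ℝ) :
    matNorm M (x - z) ≤ matNorm M (x - y) + matNorm M (y - z) := by
  simpa only [sub_add_sub_cancel] using matNorm_add_le hM (x - y) (y - z)

theorem exists_norm_le_mul_matNorm (hM : M.PosDef) :
    ∃ K : ℝ, 0 ≤ K ∧ ∀ x, ‖x‖ ≤ K * matNorm M x := by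
  obtain ⟨N, hN⟩ := exists_matNorm_eq_norm_toLp_mulVec hM.posSemidef
  have hinj : Function.Injective N.mulVecLin := by
    refine (injective_iff_map_eq_zero _).2 fun x hx => by_contra fun hne => ?_
    have hpos : 0 < M *ᵥ x ⬝ᵥ x := by
      simpa [dotProduct_comm] using hM.dotProduct_mulVec_pos hne
    rw [← sq_matNorm hM.posSemidef, hN, ← mulVecLin_apply, hx] at hpos
    simp at hpos
  obtain ⟨K, -, hK⟩ := N.mulVecLin.injective_iff_antilipschitz.1 hinj
  refine ⟨K, K.2, fun x => ?_⟩
  calc ‖x‖ ≤ K * ‖N *ᵥ x‖ := ZeroHomClass.bound_of_antilipschitz N.mulVecLin hK x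
    _ ≤ K * matNorm M x := by
      rw [hN]
      gcongr
      exact norm_le_norm_toLp _

theorem isBounded_setOf_matNorm_lt (hM : M.PosDef) (r : ℝ) :
    Bornology.IsBounded {x | matNorm M x < r} := by
  obtain ⟨K, hK₀, hK⟩ := exists_norm_le_mul_matNorm hM
  refine (Metric.isBounded_closedBall (x := 0) (r := K * r)).subset fun x hx => ?_
  exact mem_closedBall_zero_iff.2 ((hK x).trans (mul_le_mul_of_nonneg_left (le_of_lt hx) hK₀))

theorem matNorm_fst_le_phaseNorm (hM : M.PosDef) (y : (Fin d → ℝ) × (Fin d → ℝ)) :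
    matNorm M y.1 ≤ phaseNorm M y :=
  Real.sqrt_le_sqrt (le_add_of_nonneg_right (mulVec_dotProduct_self_nonneg hM.inv.posSemidef _))

theorem matNorm_snd_le_phaseNorm (hM : M.PosDef) (y : (Fin d → ℝ) × (Fin d → ℝ)) :
    matNorm M⁻¹ y.2 ≤ phaseNorm M y :=
  Real.sqrt_le_sqrt (le_add_of_nonneg_left (mulVec_dotProduct_self_nonneg hM.posSemidef _))

theorem abs_dotProduct_le {κ : Type*} [Fintype κ] (x y : κ → ℝ) :
    |x ⬝ᵥ y| ≤ Fintype.card κ * (‖x‖ * ‖y‖) := by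
  calc |x ⬝ᵥ y| ≤ ∑ i, |x i * y i| := Finset.abs_sum_le_sum_abs _ _
    _ ≤ ∑ _i : κ, ‖x‖ * ‖y‖ := by
      refine Finset.sum_le_sum fun i _ => ?_
      rw [abs_mul]
      gcongr
      · exact norm_le_pi_norm x i
      · exact norm_le_pi_norm y i
    _ = Fintype.card κ * (‖x‖ * ‖y‖) := by simp

theorem exists_norm_mulVec_le {κ : Type*} [Fintype κ] (C : Matrix κ κ ℝ) :
    ∃ K : ℝ, 0 ≤ K ∧ ∀ x, ‖C *ᵥ x‖ ≤ K * ‖x‖ :=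
  ⟨_, norm_nonneg _, (LinearMap.toContinuousLinearMap C.mulVecLin).le_opNorm⟩

theorem exists_pos_mul_mulVec_dotProduct_le {C : Matrix (Fin d) (Fin d) ℝ} (hC : C.PosDef)
    (M : Matrix (Fin d) (Fin d) ℝ) : ∃ α > 0, ∀ x, α * (M *ᵥ x ⬝ᵥ x) ≤ C *ᵥ x ⬝ᵥ x := by
  obtain ⟨K, -, hK⟩ := exists_norm_le_mul_matNorm hC
  obtain ⟨J, hJ₀, hJ⟩ := exists_norm_mulVec_le M
  have hle (x) : M *ᵥ x ⬝ᵥ x ≤ (d * J * K ^ 2) * (C *ᵥ x ⬝ᵥ x) := by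
    calc M *ᵥ x ⬝ᵥ x ≤ Fintype.card (Fin d) * (‖M *ᵥ x‖ * ‖x‖) :=
          (le_abs_self _).trans (abs_dotProduct_le _ _)
      _ ≤ d * (J * ‖x‖ * ‖x‖) := by rw [Fintype.card_fin]; gcongr; exact hJ x
      _ = d * J * ‖x‖ ^ 2 := by ring
      _ ≤ d * J * (K * matNorm C x) ^ 2 := by gcongr; exact hK x
      _ = _ := by rw [mul_pow, sq_matNorm hC.posSemidef]; ring
  have hC₀ (x) := mulVec_dotProduct_self_nonneg hC.posSemidef x
  refine ⟨(d * J * K ^ 2 + 1)⁻¹, by positivity, fun x => ?_⟩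
  rw [inv_mul_le_iff₀ (by positivity)]
  linarith [hle x, hC₀ x]

end MatNorm

section PointData

open scoped Convolution

variable {d : ℕ} {M C : Matrix (Fin d) (Fin d) ℝ} {σ s : (Fin d → ℝ) → Fin d → ℝ}
  {D : Set ((Fin d → ℝ) × (Fin d → ℝ))} {t ρ δ R γ : ℝ} {ψ : (Fin d → ℝ) → ℝ}

/-- `D` is a point sample of the graph of `σ`: every datum lies within `t` of the graph, and every
graph point with strain of size at most `r` lies within `ρ` of a datum. -/
structure IsGraphSample (M : Matrix (Fin d) (Fin d) ℝ) (σ : (Fin d → ℝ) → Fin d → ℝ)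
    (D : Set ((Fin d → ℝ) × (Fin d → ℝ))) (t ρ r : ℝ) : Prop where
  exists_graph_near : ∀ y ∈ D, ∃ ξ, phaseNorm M (y - (ξ, σ ξ)) < t
  exists_datum_near : ∀ ε, matNorm M ε ≤ r → ∃ y ∈ D, phaseNorm M ((ε, σ ε) - y) < ρ

/-- `s` reads the stress off a datum of `D` with nearest strain as long as the strain is smaller
than `R`, and is the linear law with stiffness `C` beyond. -/
structure IsNearestDatumLaw (M C : Matrix (Fin d) (Fin d) ℝ)
    (D : Set ((Fin d → ℝ) × (Fin d → ℝ))) (R : ℝ) (s : (Fin d → ℝ) → Fin d → ℝ) : Prop where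
  measurable : Measurable s
  near : ∀ ε, matNorm M ε < R →
    ∃ y ∈ D, s ε = y.2 ∧ ∀ y' ∈ D, matNorm M (y.1 - ε) ≤ matNorm M (y'.1 - ε)
  far : ∀ ε, R ≤ matNorm M ε → s ε = C *ᵥ ε

/-- Below the strain size `R` the law `s` deviates from `σ` by at most `γ`, even when the two are
evaluated at strains that differ by up to `δ`. -/
def IsUniformlyClose (M : Matrix (Fin d) (Fin d) ℝ) (σ s : (Fin d → ℝ) → Fin d → ℝ)
    (R δ γ : ℝ) : Prop :=
  ∀ ε ε', matNorm M ε' < R → matNorm M (ε - ε') < δ → ‖s ε' - σ ε‖ ≤ γ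

theorem exists_graph_point_near {r : ℝ} (hM : M.PosDef) (hD : IsGraphSample M σ D t ρ r)
    (hs : IsNearestDatumLaw M C D R s) {ε : Fin d → ℝ} (hεR : matNorm M ε < R)
    (hεr : matNorm M ε ≤ r) :
    ∃ ξ, matNorm M⁻¹ (s ε - σ ξ) < t ∧ matNorm M (ξ - ε) < t + ρ := by
  obtain ⟨y, hyD, hsy, hmin⟩ := hs.near ε hεR
  obtain ⟨y', hy'D, hy'⟩ := hD.exists_datum_near ε hεr
  obtain ⟨ξ, hξ⟩ := hD.exists_graph_near y hyD
  have hstress : matNorm M⁻¹ (y.2 - σ ξ) < t :=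
    (matNorm_snd_le_phaseNorm hM (y - (ξ, σ ξ))).trans_lt hξ
  have hstrain : matNorm M (y.1 - ξ) < t :=
    (matNorm_fst_le_phaseNorm hM (y - (ξ, σ ξ))).trans_lt hξ
  have hnearest : matNorm M (y.1 - ε) < ρ := by
    refine (hmin y' hy'D).trans_lt ?_
    rw [matNorm_sub_comm y'.1 ε]
    exact (matNorm_fst_le_phaseNorm hM ((ε, σ ε) - y')).trans_lt hy'
  refine ⟨ξ, hsy ▸ hstress, (matNorm_sub_le hM.posSemidef ξ y.1 ε).trans_lt ?_⟩
  rw [matNorm_sub_comm ξ]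
  exact add_lt_add hstrain hnearest

theorem exists_matNorm_stress_sub_le {L : ℝ} (hM : M.PosDef) (hL : 0 ≤ L)
    (hLip : ∀ ε ε', matNorm M ε < 2 * R → matNorm M ε' < 2 * R →
      matNorm M (σ ε - σ ε') ≤ L * matNorm M (ε - ε'))
    (hD : IsGraphSample M σ D t ρ (2 * R)) (hs : IsNearestDatumLaw M C D R s)
    (htρ : t + ρ ≤ R) (hδ : δ ≤ R) {ε ε' : Fin d → ℝ} (hε' : matNorm M ε' < R)
    (hεε' : matNorm M (ε - ε') < δ) :
    ∃ ξ, matNorm M⁻¹ (s ε' - σ ξ) < t ∧ matNorm M (σ ξ - σ ε) ≤ L * (t + ρ + δ) := by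
  have hR : 0 < R := (matNorm_nonneg ε').trans_lt hε'
  obtain ⟨ξ, hstress, hξε'⟩ := exists_graph_point_near hM hD hs hε' (by linarith)
  have lt_two_mul {η} (hη : matNorm M (η - ε') < R) : matNorm M η < 2 * R := by
    have := matNorm_add_le hM.posSemidef (η - ε') ε'
    rw [sub_add_cancel] at this
    linarith
  have hξε : matNorm M (ξ - ε) ≤ t + ρ + δ := by
    have := matNorm_sub_le hM.posSemidef ξ ε' ε
    rw [matNorm_sub_comm ε'] at this
    linarith
  refine ⟨ξ, hstress, (hLip ξ ε (lt_two_mul ?_) (lt_two_mul ?_)).trans ?_⟩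
  · linarith
  · linarith
  · gcongr

theorem exists_tendsto_zero_isUniformlyClose (hM : M.PosDef) {L : ℝ → ℝ}
    (hL : ∀ r, 0 < r → 0 ≤ L r)
    (hLip : ∀ r, 0 < r → ∀ ε ε', matNorm M ε < r → matNorm M ε' < r →
      matNorm M (σ ε - σ ε') ≤ L r * matNorm M (ε - ε'))
    {D : ℕ → Set ((Fin d → ℝ) × (Fin d → ℝ))} {t ρ δ R : ℕ → ℝ}
    (ht : Tendsto t atTop (𝓝 0)) (hρ : Tendsto ρ atTop (𝓝 0)) (hδ : Tendsto δ atTop (𝓝 0))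
    (hR : Tendsto R atTop atTop)
    (hlim : Tendsto (fun h => L (2 * R h) * (t h + ρ h + δ h)) atTop (𝓝 0))
    (hD : ∀ h, IsGraphSample M σ (D h) (t h) (ρ h) (2 * R h))
    {s : ℕ → (Fin d → ℝ) → Fin d → ℝ} (hs : ∀ h, IsNearestDatumLaw M C (D h) (R h) (s h)) :
    ∃ γ : ℕ → ℝ, Tendsto γ atTop (𝓝 0) ∧
      ∀ᶠ h in atTop, IsUniformlyClose M σ (s h) (R h) (δ h) (γ h) := by
  obtain ⟨K, hK₀, hK⟩ := exists_norm_le_mul_matNorm hM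
  obtain ⟨J, hJ₀, hJ⟩ := exists_norm_le_mul_matNorm hM.inv
  refine ⟨fun h => J * t h + K * (L (2 * R h) * (t h + ρ h + δ h)), ?_, ?_⟩
  · simpa using (ht.const_mul J).add (hlim.const_mul K)
  have htρ : ∀ᶠ h in atTop, t h + ρ h < 1 :=
    (ht.add hρ).eventually (gt_mem_nhds (by norm_num))
  filter_upwards [htρ, hδ.eventually (gt_mem_nhds one_pos), hR.eventually_ge_atTop 1]
    with h htρ hδ hR ε ε' hε' hεε'
  have hR₀ : 0 < 2 * R h := by linarith
  obtain ⟨ξ, hdatum, hlip⟩ := exists_matNorm_stress_sub_le hM (hL _ hR₀) (hLip _ hR₀) (hD h)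
    (hs h) (by linarith) (by linarith) hε' hεε'
  calc ‖s h ε' - σ ε‖ ≤ ‖s h ε' - σ ξ‖ + ‖σ ξ - σ ε‖ := norm_sub_le_norm_sub_add_norm_sub _ _ _
    _ ≤ J * matNorm M⁻¹ (s h ε' - σ ξ) + K * matNorm M (σ ξ - σ ε) := add_le_add (hJ _) (hK _)
    _ ≤ _ := by gcongr

theorem exists_coercive_of_norm_sub_le (hM : M.PosDef) {α : ℝ} (hα : 0 < α) (b E : ℝ) :
    ∃ β, ∀ ε τ η : Fin d → ℝ, ‖η - τ‖ ≤ E → α * (M *ᵥ ε ⬝ᵥ ε) - b ≤ τ ⬝ᵥ ε →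
      α / 2 * (M *ᵥ ε ⬝ᵥ ε) - β ≤ η ⬝ᵥ ε := by
  obtain ⟨K, -, hK⟩ := exists_norm_le_mul_matNorm hM
  set A := d * (E * K)
  refine ⟨b + A ^ 2 / (2 * α), fun ε τ η hητ hτ => ?_⟩
  have hE : 0 ≤ E := (norm_nonneg _).trans hητ
  set x := matNorm M ε
  have hperturb : |(η - τ) ⬝ᵥ ε| ≤ A * x := by
    calc |(η - τ) ⬝ᵥ ε| ≤ d * (‖η - τ‖ * ‖ε‖) := by simpa using abs_dotProduct_le (η - τ) ε
      _ ≤ d * (E * (K * x)) := by gcongr; exact hK ε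
      _ = A * x := by ring
  have hyoung : A * x ≤ α / 2 * x ^ 2 + A ^ 2 / (2 * α) := by
    have : α / 2 * x ^ 2 + A ^ 2 / (2 * α) - A * x = (α * x - A) ^ 2 / (2 * α) := by
      field_simp
      ring
    have : 0 ≤ (α * x - A) ^ 2 / (2 * α) := by positivity
    linarith
  rw [← sq_matNorm hM.posSemidef] at hτ ⊢
  rw [sub_dotProduct] at hperturb
  linarith [(abs_le.1 hperturb).1]

theorem exists_coercive_of_isUniformlyClose (hM : M.PosDef) (hC : C.PosDef) {a b : ℝ} (ha : 0 < a)
    (hmat : ∀ ε, a * (M *ᵥ ε ⬝ᵥ ε) - b ≤ σ ε ⬝ᵥ ε) :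
    ∃ α > 0, ∃ β, ∀ {s R δ γ}, IsUniformlyClose M σ s R δ γ →
      (∀ ε, R ≤ matNorm M ε → s ε = C *ᵥ ε) → δ ≤ 1 → γ ≤ 1 →
      ∀ ε ε', matNorm M (ε - ε') < δ → α * (M *ᵥ ε ⬝ᵥ ε) - β ≤ s ε' ⬝ᵥ ε := by
  obtain ⟨α, hα, hαC⟩ := exists_pos_mul_mulVec_dotProduct_le hC M
  obtain ⟨K, hK₀, hK⟩ := exists_norm_le_mul_matNorm hM
  obtain ⟨J, hJ₀, hJ⟩ := exists_norm_mulVec_le C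
  obtain ⟨β, hβ⟩ := exists_coercive_of_norm_sub_le hM (lt_min ha hα) |b| (max 1 (J * K))
  refine ⟨min a α / 2, half_pos (lt_min ha hα), β, fun {s R δ γ} hclose hfar hδ hγ ε ε' hεε' => ?_⟩
  have hq : 0 ≤ M *ᵥ ε ⬝ᵥ ε := mulVec_dotProduct_self_nonneg hM.posSemidef ε
  rcases lt_or_ge (matNorm M ε') R with hε' | hε'
  · refine hβ ε (σ ε) (s ε') ?_ ?_
    · exact (hclose ε ε' hε' hεε').trans (hγ.trans (le_max_left _ _))
    · have := mul_le_mul_of_nonneg_right (min_le_left a α) hq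
      linarith [hmat ε, le_abs_self b]
  · refine hβ ε (C *ᵥ ε) (s ε') ?_ ?_
    · rw [hfar ε' hε', ← mulVec_sub]
      refine le_max_of_le_right ((hJ _).trans ?_)
      gcongr
      refine (hK _).trans (mul_le_of_le_one_right hK₀ ?_)
      rw [matNorm_sub_comm]
      exact hεε'.le.trans hδ
    · have := mul_le_mul_of_nonneg_right (min_le_right a α) hq
      linarith [hαC ε, abs_nonneg b]

theorem IsUniformlyClose.locallyIntegrable (hclose : IsUniformlyClose M σ s R δ γ) (hδ : 0 < δ)
    (hσ : Continuous σ) (hs : IsNearestDatumLaw M C D R s) : LocallyIntegrable s := by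
  have hbound : Continuous fun ε => ‖σ ε‖ + |γ| + ‖C *ᵥ ε‖ := by fun_prop
  refine hbound.locallyIntegrable.mono hs.measurable.aestronglyMeasurable (ae_of_all _ fun ε => ?_)
  rw [Real.norm_of_nonneg (by positivity)]
  rcases lt_or_ge (matNorm M ε) R with hε | hε
  · have hdev : ‖s ε - σ ε‖ ≤ γ := hclose ε ε hε (by simpa [matNorm] using hδ)
    linarith [norm_le_norm_add_norm_sub' (s ε) (σ ε), le_abs_self γ, norm_nonneg (C *ᵥ ε)]
  · rw [hs.far ε hε]
    exact le_add_of_nonneg_left (by positivity)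

theorem IsMollifier.pos_of_setOf_matNorm_lt (hψ : IsMollifier volume {x | matNorm M x < δ} ψ) :
    0 < δ :=
  let ⟨x, hx⟩ := hψ.nonempty
  (matNorm_nonneg x).trans_lt hx

theorem continuous_convolution_of_isUniformlyClose (hM : M.PosDef) (hσ : Continuous σ)
    (hclose : IsUniformlyClose M σ s R δ γ) (hs : IsNearestDatumLaw M C D R s)
    (hψ : IsMollifier volume {x | matNorm M x < δ} ψ) :
    Continuous (ψ ⋆[.lsmul ℝ ℝ] s) :=
  (hψ.hasCompactSupport (isBounded_setOf_matNorm_lt hM δ)).continuous_convolution_left _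
    hψ.continuous (hclose.locallyIntegrable hψ.pos_of_setOf_matNorm_lt hσ hs)

theorem convolution_mem_of_isUniformlyClose (hM : M.PosDef) (hσ : Continuous σ)
    (hclose : IsUniformlyClose M σ s R δ γ) (hs : IsNearestDatumLaw M C D R s)
    (hψ : IsMollifier volume {x | matNorm M x < δ} ψ) {S : Set (Fin d → ℝ)} (hS : Convex ℝ S)
    (hSc : IsClosed S) {ε : Fin d → ℝ} (hsS : ∀ ε', matNorm M (ε - ε') < δ → s ε' ∈ S) :
    (ψ ⋆[.lsmul ℝ ℝ] s) ε ∈ S := by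
  refine hψ.convolution_mem hS hSc ?_ fun y hy => hsS _ (by rwa [sub_sub_cancel])
  exact (hψ.hasCompactSupport (isBounded_setOf_matNorm_lt hM δ)).convolutionExists_left _
    hψ.continuous (hclose.locallyIntegrable hψ.pos_of_setOf_matNorm_lt hσ hs) ε

theorem le_convolution_dotProduct (hM : M.PosDef) (hσ : Continuous σ)
    (hclose : IsUniformlyClose M σ s R δ γ) (hs : IsNearestDatumLaw M C D R s)
    (hψ : IsMollifier volume {x | matNorm M x < δ} ψ) {ε : Fin d → ℝ} {κ : ℝ}
    (hκ : ∀ ε', matNorm M (ε - ε') < δ → κ ≤ s ε' ⬝ᵥ ε) :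
    κ ≤ (ψ ⋆[.lsmul ℝ ℝ] s) ε ⬝ᵥ ε := by
  have hlin : IsLinearMap ℝ fun η : Fin d → ℝ => η ⬝ᵥ ε :=
    ⟨fun _ _ => add_dotProduct _ _ _, fun _ _ => smul_dotProduct _ _ _⟩
  exact convolution_mem_of_isUniformlyClose hM hσ hclose hs hψ (convex_halfSpace_ge hlin κ)
    (isClosed_le continuous_const (by fun_prop)) hκ

theorem norm_convolution_sub_le (hM : M.PosDef) (hσ : Continuous σ)
    (hclose : IsUniformlyClose M σ s R δ γ) (hs : IsNearestDatumLaw M C D R s)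
    (hψ : IsMollifier volume {x | matNorm M x < δ} ψ) {ε : Fin d → ℝ}
    (hε : matNorm M ε + δ ≤ R) : ‖(ψ ⋆[.lsmul ℝ ℝ] s) ε - σ ε‖ ≤ γ := by
  refine mem_closedBall_iff_norm.1 <| convolution_mem_of_isUniformlyClose hM hσ hclose hs hψ
    (convex_closedBall _ _) Metric.isClosed_closedBall fun ε' hεε' => ?_
  refine mem_closedBall_iff_norm.2 (hclose ε ε' ?_ hεε')
  have := matNorm_add_le hM.posSemidef (ε' - ε) ε
  rw [sub_add_cancel, matNorm_sub_comm] at this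
  linarith

theorem tendsto_uncurry_convolution (hM : M.PosDef) (hσ : Continuous σ) {δ R γ : ℕ → ℝ}
    (hδ : Tendsto δ atTop (𝓝 0)) (hR : Tendsto R atTop atTop) (hγ : Tendsto γ atTop (𝓝 0))
    {D : ℕ → Set ((Fin d → ℝ) × (Fin d → ℝ))} {s : ℕ → (Fin d → ℝ) → Fin d → ℝ}
    (hclose : ∀ᶠ h in atTop, IsUniformlyClose M σ (s h) (R h) (δ h) (γ h))
    (hs : ∀ h, IsNearestDatumLaw M C (D h) (R h) (s h)) {ψ : ℕ → (Fin d → ℝ) → ℝ}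
    (hψ : ∀ h, IsMollifier volume {x | matNorm M x < δ h} (ψ h)) (ε : Fin d → ℝ) :
    Tendsto (fun p : ℕ × (Fin d → ℝ) => (ψ p.1 ⋆[.lsmul ℝ ℝ] s p.1) p.2) (atTop ×ˢ 𝓝 ε)
      (𝓝 (σ ε)) := by
  have hbound : ∀ᶠ p in atTop ×ˢ 𝓝 ε, matNorm M p.2 + δ p.1 ≤ R p.1 := by
    have hmat : ∀ᶠ p : ℕ × (Fin d → ℝ) in atTop ×ˢ 𝓝 ε, matNorm M p.2 < matNorm M ε + 1 :=
      ((continuous_matNorm.tendsto ε).comp tendsto_snd).eventually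
        (gt_mem_nhds (lt_add_one _))
    filter_upwards [hmat, tendsto_fst.eventually (hδ.eventually (gt_mem_nhds one_pos)),
      tendsto_fst.eventually (hR.eventually_ge_atTop (matNorm M ε + 2))] with p hp hδp hRp
    linarith
  have hdiff : Tendsto (fun p : ℕ × (Fin d → ℝ) => (ψ p.1 ⋆[.lsmul ℝ ℝ] s p.1) p.2 - σ p.2)
      (atTop ×ˢ 𝓝 ε) (𝓝 0) := by
    refine squeeze_zero_norm' ?_ (hγ.comp tendsto_fst)
    filter_upwards [hbound, tendsto_fst.eventually hclose] with p hp hpclose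
    exact norm_convolution_sub_le hM hσ hpclose (hs p.1) (hψ p.1) hp
  simpa using hdiff.add ((hσ.tendsto ε).comp tendsto_snd)

theorem exists_eventually_coercive_convolution (hM : M.PosDef) (hC : C.PosDef) (hσ : Continuous σ)
    {a b : ℝ} (ha : 0 < a) (hmat : ∀ ε, a * (M *ᵥ ε ⬝ᵥ ε) - b ≤ σ ε ⬝ᵥ ε) {δ R γ : ℕ → ℝ}
    (hδ : Tendsto δ atTop (𝓝 0)) (hγ : Tendsto γ atTop (𝓝 0))
    {D : ℕ → Set ((Fin d → ℝ) × (Fin d → ℝ))} {s : ℕ → (Fin d → ℝ) → Fin d → ℝ}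
    (hclose : ∀ᶠ h in atTop, IsUniformlyClose M σ (s h) (R h) (δ h) (γ h))
    (hs : ∀ h, IsNearestDatumLaw M C (D h) (R h) (s h)) {ψ : ℕ → (Fin d → ℝ) → ℝ}
    (hψ : ∀ h, IsMollifier volume {x | matNorm M x < δ h} (ψ h)) :
    ∃ α > 0, ∃ β, ∀ᶠ h in atTop, ∀ ε,
      α * (M *ᵥ ε ⬝ᵥ ε) - β ≤ (ψ h ⋆[.lsmul ℝ ℝ] s h) ε ⬝ᵥ ε := by
  obtain ⟨α, hα, β, hcoer⟩ := exists_coercive_of_isUniformlyClose hM hC ha hmat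
  refine ⟨α, hα, β, ?_⟩
  filter_upwards [hclose, hδ.eventually (ge_mem_nhds one_pos),
    hγ.eventually (ge_mem_nhds one_pos)] with h hcl hδh hγh ε
  exact le_convolution_dotProduct hM hσ hcl (hs h) (hψ h)
    (hcoer hcl (hs h).far hδh hγh ε)

theorem exists_common_coercive {ι : Type*} [Finite ι] {M : ι → Matrix (Fin d) (Fin d) ℝ}
    (hM : ∀ e, (M e).PosSemidef) {τ : ι → ℕ → (Fin d → ℝ) → Fin d → ℝ}
    (hτ : ∀ e, ∃ α > 0, ∃ β, ∀ᶠ h in atTop, ∀ ε, α * (M e *ᵥ ε ⬝ᵥ ε) - β ≤ τ e h ε ⬝ᵥ ε) :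
    ∃ α > 0, ∃ β : ι → ℝ, ∀ᶠ h in atTop, ∀ e ε,
      α * (M e *ᵥ ε ⬝ᵥ ε) - β e ≤ τ e h ε ⬝ᵥ ε := by
  choose α hα β hcoer using hτ
  obtain ⟨α₀, hle, hpos⟩ : ∃ α₀ : ℝ, (∀ e, α₀ ∈ Set.Ioc 0 (α e)) ∧ 0 < α₀ :=
    ((eventually_all.2 fun e => Ioc_mem_nhdsGT (hα e)).and self_mem_nhdsWithin).exists
  refine ⟨α₀, hpos, β, (eventually_all.2 hcoer).mono fun h hh e ε => (hh e ε).trans' ?_⟩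
  gcongr
  · exact mulVec_dotProduct_self_nonneg (hM e) ε
  · exact (hle e).2

end PointData

open scoped Convolution in
theorem uniform_approximation_by_point_data_general {ι ν : Type*} [Fintype ι] [Fintype ν]
    [DecidableEq ν] {d : ℕ} {w : ι → ℝ} (hw : ∀ e, 0 ≤ w e)
    {M C : ι → Matrix (Fin d) (Fin d) ℝ} (hM : ∀ e, (M e).PosDef) (hC : ∀ e, (C e).PosDef)
    {σ : ι → (Fin d → ℝ) → Fin d → ℝ} (hσ : ∀ e, Continuous (σ e)) {a b : ℝ} (ha : 0 < a)
    (hmat : ∀ e ε, a * (M e *ᵥ ε ⬝ᵥ ε) - b ≤ σ e ε ⬝ᵥ ε)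
    {L : ℝ → ℝ} (hL : ∀ r, 0 < r → 0 ≤ L r)
    (hLip : ∀ r, 0 < r → ∀ e ε ε', matNorm (M e) ε < r → matNorm (M e) ε' < r →
      matNorm (M e) (σ e ε - σ e ε') ≤ L r * matNorm (M e) (ε - ε'))
    {B : ι → (ν → ℝ) →ₗ[ℝ] Fin d → ℝ} {c : ℝ} (hc : 0 < c)
    (hstruct : ∀ u, u ⬝ᵥ u ≤ c * ∑ e, w e * (M e *ᵥ B e u ⬝ᵥ B e u))
    {t ρ δ R : ℕ → ℝ} (ht : Tendsto t atTop (𝓝 0)) (hρ : Tendsto ρ atTop (𝓝 0))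
    (hδ : Tendsto δ atTop (𝓝 0)) (hR : Tendsto R atTop atTop)
    (hlim : Tendsto (fun h => L (2 * R h) * (t h + ρ h + δ h)) atTop (𝓝 0))
    {D : ι → ℕ → Set ((Fin d → ℝ) × (Fin d → ℝ))}
    (hD : ∀ e h, IsGraphSample (M e) (σ e) (D e h) (t h) (ρ h) (2 * R h))
    {s : ι → ℕ → (Fin d → ℝ) → Fin d → ℝ}
    (hs : ∀ e h, IsNearestDatumLaw (M e) (C e) (D e h) (R h) (s e h))
    {ψ : ι → ℕ → (Fin d → ℝ) → ℝ}
    (hψ : ∀ e h, IsMollifier volume {x | matNorm (M e) x < δ h} (ψ e h)) :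
    ∃ H : ℕ, ∀ f,
      (∀ h, H ≤ h → ∃ u, internalForce w B (fun e => ψ e h ⋆[.lsmul ℝ ℝ] s e h) u = f) ∧
      ∀ u : ℕ → ν → ℝ,
        (∀ h, H ≤ h → internalForce w B (fun e => ψ e h ⋆[.lsmul ℝ ℝ] s e h) (u h) = f) →
        (∃ φ : ℕ → ℕ, StrictMono φ ∧ ∃ ustar,
          Tendsto (u ∘ φ) atTop (𝓝 ustar) ∧ internalForce w B σ ustar = f) ∧
        (∀ θ : ℝ, 0 < θ →
          (∀ e ε' ε'', θ * (M e *ᵥ (ε' - ε'') ⬝ᵥ (ε' - ε'')) ≤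
            (σ e ε' - σ e ε'') ⬝ᵥ (ε' - ε'')) →
          ∃ ustar, internalForce w B σ ustar = f ∧
            (∀ u', internalForce w B σ u' = f → u' = ustar) ∧ Tendsto u atTop (𝓝 ustar)) := by
  choose γ hγ hclose using fun e => exists_tendsto_zero_isUniformlyClose (hM e) hL
    (fun r hr => hLip r hr e) ht hρ hδ hR hlim (hD e) (hs e)
  obtain ⟨α, hα, β, hcoer⟩ := exists_common_coercive (fun e => (hM e).posSemidef) fun e =>
    exists_eventually_coercive_convolution (hM e) (hC e) (hσ e) ha (hmat e) hδ (hγ e) (hclose e)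
      (hs e) (hψ e)
  have hcont : ∀ᶠ h in atTop,
      Continuous (internalForce w B fun e => ψ e h ⋆[.lsmul ℝ ℝ] s e h) := by
    filter_upwards [eventually_all.2 hclose] with h hclose
    exact continuous_internalForce fun e =>
      continuous_convolution_of_isUniformlyClose (hM e) (hσ e) (hclose e) (hs e h) (hψ e h)
  obtain ⟨H, hH⟩ := exists_solution_and_tendsto_of_coercive (div_pos hα hc) hcont
    (hcoer.mono fun h hh => coercive_internalForce hw hc hstruct hα.le hh)
    (tendsto_uncurry_internalForce fun e =>
      tendsto_uncurry_convolution (hM e) (hσ e) hδ hR (hγ e) (hclose e) (hs e) (hψ e))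
  refine ⟨H, fun f => ⟨(hH f).1, fun u hu => ⟨((hH f).2 u hu).1, fun θ hθ hmono => ?_⟩⟩⟩
  exact ((hH f).2 u hu).2 (injective_internalForce (q := fun e ε => M e *ᵥ ε ⬝ᵥ ε) hw hc hstruct
    hθ hmono)

/-- **Uniform approximation by point data.** If the data sets `D_{e,h}` approximate the
graph `G_e` of the material law `σ̂_e` uniformly (within `t_h`), finely (within `ρ_h` up
to strains of size `2R_h`) and `L_{2R_h}(t_h + ρ_h + δ_h) → 0`, then for sufficiently
large `h` the displacement problem for the mollified nearest-neighbour effective law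
`σ̂_{e,h} = ψ_{δ_h} ∗ s_{e,h}` has a solution `u_h`; a subsequence of any such sequence
of solutions converges to a solution `u` of the limiting problem, and under strict
monotonicity the limiting solution is unique and the whole sequence converges to it. -/
theorem uniform_approximation_by_point_data (m d n : ℕ)
    (w : Fin m → ℝ) (hw : ∀ e, 0 < w e)
    (𝔹 : Fin m → Matrix (Fin d) (Fin d) ℝ) (h𝔹 : ∀ e, (𝔹 e).PosDef)
    (σ : Fin m → (Fin d → ℝ) → (Fin d → ℝ)) (hσ : ∀ e, Continuous (σ e))
    (a b : ℝ) (ha : 0 < a) (hb : 0 ≤ b)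
    (hmat : ∀ e (ε : Fin d → ℝ), a * ((𝔹 e).mulVec ε ⬝ᵥ ε) - b ≤ σ e ε ⬝ᵥ ε)
    (L : ℝ → ℝ) (hLpos : ∀ R : ℝ, 0 < R → 0 < L R)
    (hLip : ∀ R : ℝ, 0 < R → ∀ e (ε ε' : Fin d → ℝ),
      matNorm (𝔹 e) ε < R → matNorm (𝔹 e) ε' < R →
      matNorm (𝔹 e) (σ e ε - σ e ε') ≤ L R * matNorm (𝔹 e) (ε - ε'))
    (B : Fin m → (Fin n → ℝ) →ₗ[ℝ] (Fin d → ℝ))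
    (c : ℝ) (hc : 0 < c)
    (hstruct : ∀ u : Fin n → ℝ,
      u ⬝ᵥ u ≤ c * ∑ e, w e * ((𝔹 e).mulVec (B e u) ⬝ᵥ (B e u)))
    (D : Fin m → ℕ → Finset ((Fin d → ℝ) × (Fin d → ℝ)))
    (hD : ∀ e h, (D e h).Nonempty)
    (t ρ δ R : ℕ → ℝ)
    (ht0 : Tendsto t atTop (𝓝 0)) (hρ0 : Tendsto ρ atTop (𝓝 0))
    (hδ0 : Tendsto δ atTop (𝓝 0)) (hRinf : Tendsto R atTop atTop)
    -- (1) every data point lies within `t_h` of the graph `G_e`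
    (hband : ∀ e h, ∀ y ∈ D e h, ∃ ξ : Fin d → ℝ,
      phaseNorm (𝔹 e) (y - (ξ, σ e ξ)) < t h)
    -- (2) fine approximation of the graph up to strains of size `2R_h`
    (hfine : ∀ e h (ε : Fin d → ℝ), matNorm (𝔹 e) ε ≤ 2 * R h →
      ∃ y ∈ D e h, phaseNorm (𝔹 e) ((ε, σ e ε) - y) < ρ h)
    -- (3)
    (hlim : Tendsto (fun h => L (2 * R h) * (t h + ρ h + δ h)) atTop (𝓝 0))
    -- the unregularized nearest-neighbour law `s_{e,h}` with linear extrapolation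
    (Cm : Fin m → Matrix (Fin d) (Fin d) ℝ) (hCm : ∀ e, (Cm e).PosDef)
    (s : Fin m → ℕ → (Fin d → ℝ) → (Fin d → ℝ))
    (hsmeas : ∀ e h, Measurable (s e h))
    (hsnear : ∀ e h (ε : Fin d → ℝ), matNorm (𝔹 e) ε < R h →
      ∃ y ∈ D e h, s e h ε = y.2 ∧
        ∀ y' ∈ D e h, matNorm (𝔹 e) (y.1 - ε) ≤ matNorm (𝔹 e) (y'.1 - ε))
    (hsfar : ∀ e h (ε : Fin d → ℝ), R h ≤ matNorm (𝔹 e) ε →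
      s e h ε = (Cm e).mulVec ε)
    -- the mollification kernels `ψ_{δ_h} ∈ C_c^∞(B_{δ_h};[0,∞))`, even, of unit integral
    (ψ : Fin m → ℕ → (Fin d → ℝ) → ℝ)
    (hψsmooth : ∀ e h, ContDiff ℝ (⊤ : ℕ∞) (ψ e h))
    (hψsupp : ∀ e h (x : Fin d → ℝ), ψ e h x ≠ 0 → matNorm (𝔹 e) x < δ h)
    (hψnonneg : ∀ e h (x : Fin d → ℝ), 0 ≤ ψ e h x)
    (hψeven : ∀ e h (x : Fin d → ℝ), ψ e h (-x) = ψ e h x)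
    (hψint : ∀ e h, ∫ x : Fin d → ℝ, ψ e h x = 1)
    (f : Fin n → ℝ) :
    ∃ H : ℕ,
      (∀ h, H ≤ h → ∃ u : Fin n → ℝ, ∀ v : Fin n → ℝ,
        ∑ e, w e * ((∫ x : Fin d → ℝ, ψ e h x • s e h (B e u - x)) ⬝ᵥ (B e v)) =
          f ⬝ᵥ v) ∧
      ∀ u : ℕ → Fin n → ℝ,
        (∀ h, H ≤ h → ∀ v : Fin n → ℝ,
          ∑ e, w e * ((∫ x : Fin d → ℝ, ψ e h x • s e h (B e (u h) - x)) ⬝ᵥ (B e v)) =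
            f ⬝ᵥ v) →
        (∃ φ : ℕ → ℕ, StrictMono φ ∧ ∃ ustar : Fin n → ℝ,
          Tendsto (u ∘ φ) atTop (𝓝 ustar) ∧
          ∀ v : Fin n → ℝ,
            ∑ e, w e * (σ e (B e ustar) ⬝ᵥ (B e v)) = f ⬝ᵥ v) ∧
        (∀ θ : ℝ, 0 < θ →
          (∀ e (ε' ε'' : Fin d → ℝ),
            θ * ((𝔹 e).mulVec (ε' - ε'') ⬝ᵥ (ε' - ε'')) ≤
              (σ e ε' - σ e ε'') ⬝ᵥ (ε' - ε'')) →
          ∃ ustar : Fin n → ℝ,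
            (∀ v : Fin n → ℝ,
              ∑ e, w e * (σ e (B e ustar) ⬝ᵥ (B e v)) = f ⬝ᵥ v) ∧
            (∀ u' : Fin n → ℝ,
              (∀ v : Fin n → ℝ,
                ∑ e, w e * (σ e (B e u') ⬝ᵥ (B e v)) = f ⬝ᵥ v) → u' = ustar) ∧
            Tendsto u atTop (𝓝 ustar)) := by
  obtain ⟨H, hH⟩ := uniform_approximation_by_point_data_general (fun e => (hw e).le) h𝔹 hCm hσ ha
    hmat (fun r hr => (hLpos r hr).le) hLip hc hstruct ht0 hρ0 hδ0 hRinf hlim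
    (fun e h => ⟨hband e h, hfine e h⟩) (fun e h => ⟨hsmeas e h, hsnear e h, hsfar e h⟩)
    fun e h => ⟨(hψsmooth e h).continuous, hψsupp e h, hψnonneg e h, hψint e h⟩
  exact ⟨H, by
    simpa only [internalForce_eq_iff, convolution, ContinuousLinearMap.lsmul_apply] using hH f⟩
end

section
/- Let ‖·‖ be a norm on ℝᵈ and let k = diam([0,1]^d) in this norm. Let ρ > 0, p ∈ ℝᵈ, and Q = p + [0,ρ)^d. Then for every ε ∈ ℝᵈ, every q′ ∈ Q and every β > 0: (e^{−2k²βρ²}/ρ^d) ∫_Q e^{−2β‖q−ε‖²} dq ≤ e^{−β‖q′−ε‖²} ≤ (e^{k²βρ²}/ρ^d) ∫_Q e^{−(β/2)‖q−ε‖²} dq. -/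
open MeasureTheory

/-!
For `q, q'` in the cube, `‖q - q'‖ ≤ kρ`, since the cube is a translate of `ρ • [0,1)^d`. The
triangle inequality and `(a + b)² ≤ 2(a² + b²)` then give `‖q' - ε‖² ≤ 2(kρ)² + 2‖q - ε‖²`, and the
same with `q` and `q'` exchanged. Exponentiating compares the Gaussian weights at `q` and `q'`
pointwise, at the cost of a factor `2` in the exponent, and averaging over `q` in the cube, whose
volume is `ρ^d`, gives both inequalities.
-/

section Seminorm

variable {E : Type*} [AddCommGroup E] [Module ℝ E]

lemma seminorm_sub_sq_le (N : Seminorm ℝ E) {r : ℝ} {x y : E} (h : N (x - y) ≤ r) (z : E) :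
    N (y - z) ^ 2 ≤ 2 * (r ^ 2 + N (x - z) ^ 2) :=
  calc N (y - z) ^ 2
    _ ≤ (N (y - x) + N (x - z)) ^ 2 := by gcongr; exact le_map_sub_add_map_sub N y x z
    _ ≤ (r + N (x - z)) ^ 2 := by gcongr; rwa [map_sub_rev]
    _ ≤ 2 * (r ^ 2 + N (x - z) ^ 2) := add_sq_le

lemma exp_neg_two_mul_seminorm_sq_le (N : Seminorm ℝ E) {b r : ℝ} (hb : 0 ≤ b) {x y : E}
    (h : N (x - y) ≤ r) (z : E) :
    Real.exp (-(2 * b) * N (x - z) ^ 2) ≤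
      Real.exp (2 * b * r ^ 2) * Real.exp (-b * N (y - z) ^ 2) := by
  rw [← Real.exp_add, Real.exp_le_exp]
  linarith [mul_le_mul_of_nonneg_left (seminorm_sub_sq_le N h z) hb]

/-- The diameter of `s` with respect to the seminorm `N`, which is the constant `k` when
`s = [0,1]^d`. As a real supremum it takes the junk value `0` when the distances between points of
`s` are unbounded. -/
noncomputable def seminormDiam (N : Seminorm ℝ E) (s : Set E) : ℝ :=
  sSup {r : ℝ | ∃ x ∈ s, ∃ y ∈ s, r = N (x - y)}

variable [TopologicalSpace E] [ContinuousSub E] {N : Seminorm ℝ E} {s : Set E}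

lemma seminorm_sub_le_seminormDiam (hN : Continuous N) (hs : IsCompact s) {x y : E} (hx : x ∈ s)
    (hy : y ∈ s) : N (x - y) ≤ seminormDiam N s := by
  have hdist : Continuous fun z : E × E ↦ N (z.1 - z.2) := by fun_prop
  refine le_csSup (((hs.prod hs).image hdist).bddAbove.mono ?_) ⟨x, hx, y, hy, rfl⟩
  rintro _ ⟨x, hx, y, hy, rfl⟩
  exact ⟨(x, y), ⟨hx, hy⟩, rfl⟩

variable [MeasurableSpace E] [OpensMeasurableSpace E] {μ : Measure E} {b r : ℝ} {x : E}

lemma integrableOn_exp_neg_mul_seminorm_sq (hN : Continuous N) (hb : 0 ≤ b) (hs : μ s ≠ ⊤)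
    (z : E) : IntegrableOn (fun q ↦ Real.exp (-b * N (q - z) ^ 2)) s μ := by
  have hcont : Continuous fun q ↦ Real.exp (-b * N (q - z) ^ 2) := by fun_prop
  refine .of_bound hs.lt_top hcont.measurable.aestronglyMeasurable 1 (ae_of_all _ fun q ↦ ?_)
  rw [Real.norm_eq_abs, Real.abs_exp, Real.exp_le_one_iff, neg_mul, neg_nonpos]
  positivity

lemma exp_neg_mul_setAverage_exp_le (hN : Continuous N) (hb : 0 ≤ b) (hs : MeasurableSet s)
    (hs₀ : μ s ≠ 0) (hs_top : μ s ≠ ⊤) (hr : ∀ q ∈ s, N (q - x) ≤ r) (z : E) :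
    Real.exp (-(2 * b * r ^ 2)) * ⨍ q in s, Real.exp (-(2 * b) * N (q - z) ^ 2) ∂μ ≤
      Real.exp (-b * N (x - z) ^ 2) := by
  rw [Real.exp_neg, inv_mul_le_iff₀ (Real.exp_pos _)]
  exact (convex_Iic _).set_average_mem isClosed_Iic hs₀ hs_top
    (ae_restrict_of_forall_mem hs fun q hq ↦ exp_neg_two_mul_seminorm_sq_le N hb (hr q hq) z)
    (integrableOn_exp_neg_mul_seminorm_sq hN (by positivity) hs_top z)

lemma exp_le_exp_mul_setAverage_exp (hN : Continuous N) (hb : 0 ≤ b) (hs : MeasurableSet s)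
    (hs₀ : μ s ≠ 0) (hs_top : μ s ≠ ⊤) (hr : ∀ q ∈ s, N (q - x) ≤ r) (z : E) :
    Real.exp (-b * N (x - z) ^ 2) ≤
      Real.exp (b * r ^ 2) * ⨍ q in s, Real.exp (-(b / 2) * N (q - z) ^ 2) ∂μ := by
  have hpointwise : ∀ q ∈ s, (Real.exp (b * r ^ 2))⁻¹ * Real.exp (-b * N (x - z) ^ 2) ≤
      Real.exp (-(b / 2) * N (q - z) ^ 2) := by
    intro q hq
    rw [inv_mul_le_iff₀ (Real.exp_pos _)]
    have hxq : N (x - q) ≤ r := map_sub_rev N x q ▸ hr q hq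
    simpa only [mul_div_cancel₀ b two_ne_zero] using
      exp_neg_two_mul_seminorm_sq_le N (div_nonneg hb zero_le_two) hxq z
  rw [← inv_mul_le_iff₀ (Real.exp_pos _)]
  exact (convex_Ici _).set_average_mem isClosed_Ici hs₀ hs_top
    (ae_restrict_of_forall_mem hs hpointwise)
    (integrableOn_exp_neg_mul_seminorm_sq hN (by positivity) hs_top z)

end Seminorm

lemma continuous_seminorm_of_finiteDimensional {E : Type*} [NormedAddCommGroup E]
    [NormedSpace ℝ E] [FiniteDimensional ℝ E] (N : Seminorm ℝ E) : Continuous N :=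
  continuousOn_univ.1 (N.convexOn.continuousOn isOpen_univ)

section HalfOpenCube

variable {ι : Type*}

/-- The half-open cube `p + [0,ρ)^ι` with lower corner `p` and side `ρ`, the domain `Q` over which
the Gaussian weights are averaged. -/
def halfOpenCube (p : ι → ℝ) (ρ : ℝ) : Set (ι → ℝ) :=
  Set.univ.pi fun i ↦ Set.Ico (p i) (p i + ρ)

variable {p : ι → ℝ} {ρ : ℝ}

lemma inv_smul_sub_mem_Icc_of_mem_halfOpenCube (hρ : 0 < ρ) {q : ι → ℝ}
    (hq : q ∈ halfOpenCube p ρ) : ρ⁻¹ • (q - p) ∈ Set.Icc 0 1 := by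
  refine ⟨fun i ↦ ?_, fun i ↦ ?_⟩
  · exact mul_nonneg (inv_nonneg.2 hρ.le) (sub_nonneg.2 (hq i trivial).1)
  · exact (inv_mul_le_one₀ hρ).2 (sub_le_iff_le_add'.2 (hq i trivial).2.le)

lemma seminorm_sub_le_of_mem_halfOpenCube [Finite ι] (N : Seminorm ℝ (ι → ℝ)) (hρ : 0 < ρ)
    {q q' : ι → ℝ} (hq : q ∈ halfOpenCube p ρ) (hq' : q' ∈ halfOpenCube p ρ) :
    N (q - q') ≤ seminormDiam N (Set.Icc 0 1) * ρ := by
  cases nonempty_fintype ι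
  have hrescaled : N (ρ⁻¹ • (q - p) - ρ⁻¹ • (q' - p)) ≤ seminormDiam N (Set.Icc 0 1) :=
    seminorm_sub_le_seminormDiam (continuous_seminorm_of_finiteDimensional N) isCompact_Icc
      (inv_smul_sub_mem_Icc_of_mem_halfOpenCube hρ hq)
      (inv_smul_sub_mem_Icc_of_mem_halfOpenCube hρ hq')
  rwa [← smul_sub, sub_sub_sub_cancel_right, map_smul_eq_mul, norm_inv, Real.norm_of_nonneg hρ.le,
    inv_mul_le_iff₀' hρ] at hrescaled

lemma measurableSet_halfOpenCube [Countable ι] : MeasurableSet (halfOpenCube p ρ) :=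
  .univ_pi fun _ ↦ measurableSet_Ico

variable [Fintype ι]

lemma volume_halfOpenCube (p : ι → ℝ) (ρ : ℝ) :
    volume (halfOpenCube p ρ) = ENNReal.ofReal ρ ^ Fintype.card ι := by
  simp [halfOpenCube, volume_pi_pi]

lemma setAverage_halfOpenCube (hρ : 0 ≤ ρ) (f : (ι → ℝ) → ℝ) :
    ⨍ q in halfOpenCube p ρ, f q = (ρ ^ Fintype.card ι)⁻¹ * ∫ q in halfOpenCube p ρ, f q := by
  rw [setAverage_eq, measureReal_def, volume_halfOpenCube, ENNReal.toReal_pow,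
    ENNReal.toReal_ofReal hρ, smul_eq_mul]

end HalfOpenCube

theorem gaussian_cube_comparison_general {ι : Type*} [Fintype ι] (N : Seminorm ℝ (ι → ℝ))
    {ρ : ℝ} (hρ : 0 < ρ) {p q' : ι → ℝ} (hq' : q' ∈ halfOpenCube p ρ) (ε : ι → ℝ)
    {β : ℝ} (hβ : 0 ≤ β) :
    (Real.exp (-(2 * seminormDiam N (Set.Icc 0 1) ^ 2 * β * ρ ^ 2)) / ρ ^ Fintype.card ι) *
        ∫ q in halfOpenCube p ρ, Real.exp (-(2 * β) * N (q - ε) ^ 2) ≤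
      Real.exp (-β * N (q' - ε) ^ 2) ∧
    Real.exp (-β * N (q' - ε) ^ 2) ≤
      (Real.exp (seminormDiam N (Set.Icc 0 1) ^ 2 * β * ρ ^ 2) / ρ ^ Fintype.card ι) *
        ∫ q in halfOpenCube p ρ, Real.exp (-(β / 2) * N (q - ε) ^ 2) := by
  have hN := continuous_seminorm_of_finiteDimensional N
  have hvol₀ : volume (halfOpenCube p ρ) ≠ 0 := by simp [volume_halfOpenCube, hρ]
  have hvol_top : volume (halfOpenCube p ρ) ≠ ⊤ := by simp [volume_halfOpenCube]
  have hdiam : ∀ q ∈ halfOpenCube p ρ, N (q - q') ≤ seminormDiam N (Set.Icc 0 1) * ρ :=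
    fun q hq ↦ seminorm_sub_le_of_mem_halfOpenCube N hρ hq hq'
  simp only [div_eq_mul_inv _ (ρ ^ _), mul_assoc _ (ρ ^ _)⁻¹, ← setAverage_halfOpenCube hρ.le]
  constructor
  · convert exp_neg_mul_setAverage_exp_le hN hβ measurableSet_halfOpenCube hvol₀ hvol_top hdiam ε
      using 3
    ring
  · convert exp_le_exp_mul_setAverage_exp hN hβ measurableSet_halfOpenCube hvol₀ hvol_top hdiam ε
      using 3
    ring

/-- Comparison between a Gaussian weight evaluated at a point `q'` of a half-open cube
`Q = p + [0,ρ)^d` of side `ρ` and the Gaussian integrals over `Q`, for an arbitrary norm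
`nrm` on `ℝᵈ` with `k = diam([0,1]^d)`:
`(e^{−2k²βρ²}/ρ^d) ∫_Q e^{−2β‖q−ε‖²} dq ≤ e^{−β‖q′−ε‖²} ≤ (e^{k²βρ²}/ρ^d) ∫_Q e^{−(β/2)‖q−ε‖²} dq`. -/
theorem gaussian_cube_comparison (d : ℕ)
    (nrm : (Fin d → ℝ) → ℝ)
    (htri : ∀ x y : Fin d → ℝ, nrm (x + y) ≤ nrm x + nrm y)
    (hhom : ∀ (s : ℝ) (x : Fin d → ℝ), nrm (s • x) = |s| * nrm x)
    (hdef : ∀ x : Fin d → ℝ, nrm x = 0 → x = 0)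
    (k : ℝ)
    (hk : k = sSup {r : ℝ | ∃ x ∈ Set.Icc (0 : Fin d → ℝ) 1,
        ∃ y ∈ Set.Icc (0 : Fin d → ℝ) 1, r = nrm (x - y)})
    (ρ : ℝ) (hρ : 0 < ρ) (p : Fin d → ℝ)
    (ε : Fin d → ℝ) (q' : Fin d → ℝ)
    (hq' : ∀ i, q' i ∈ Set.Ico (p i) (p i + ρ))
    (β : ℝ) (hβ : 0 < β) :
    (Real.exp (-(2 * k ^ 2 * β * ρ ^ 2)) / ρ ^ d) *
        ∫ q in Set.univ.pi (fun i => Set.Ico (p i) (p i + ρ)),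
          Real.exp (-(2 * β) * nrm (q - ε) ^ 2) ≤
      Real.exp (-β * nrm (q' - ε) ^ 2) ∧
    Real.exp (-β * nrm (q' - ε) ^ 2) ≤
      (Real.exp (k ^ 2 * β * ρ ^ 2) / ρ ^ d) *
        ∫ q in Set.univ.pi (fun i => Set.Ico (p i) (p i + ρ)),
          Real.exp (-(β / 2) * nrm (q - ε) ^ 2) := by
  subst hk
  have h :=
    gaussian_cube_comparison_general (Seminorm.of nrm htri hhom) hρ (fun i _ ↦ hq' i) ε hβ.le
  rwa [Fintype.card_fin] at h
end

section
/- Let ‖·‖ be a norm on ℝᵈ with k = diam([0,1]^d) in this norm and c = ∫_{ℝᵈ} e^{−‖q‖²} dq. Let ρ > 0 and let (ε_i)_{i=1}^N be points in ℝᵈ such that every cube p + [0,ρ)^d with p ∈ ρℤᵈ contains at most C of the points ε_i. Then for every ε ∈ ℝᵈ and β > 0: Σ_{i=1}^N e^{−β‖ε_i−ε‖²} ≤ (C c / ρ^d) · e^{k²βρ²} · (β/2)^{−d/2}. -/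
open MeasureTheory

/-! Replace each point `ε_i` by the cube of the grid `ρℤᵈ` containing it. Two points of one cube are
at distance at most `kρ`, so `(a + b)² ≤ 2(a² + b²)` bounds `e^{−β‖ε_i−ε‖²}` by
`e^{k²βρ²} e^{−(β/2)‖q−ε‖²}` for every `q` in that cube, and therefore by the average over the cube.
Each cube is used at most `C` times, so the sum of these averages is at most
`C / ρ^d` times the integral over the whole space, which equals `c (β/2)^{−d/2}` by scaling. -/

section Partition

variable {α κ σ : Type*} [MeasurableSpace α] {μ : Measure α} [Fintype σ] {cell : α → κ} {C : ℕ}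
  {g : α → ℝ}

lemma sum_setIntegral_fiber_le (hmeas : ∀ k, MeasurableSet (cell ⁻¹' {k})) {label : σ → κ}
    (hcount : ∀ k, {i | label i = k}.ncard ≤ C) (hg : Integrable g μ) (hg_nonneg : 0 ≤ g) :
    ∑ i, ∫ y in cell ⁻¹' {label i}, g y ∂μ ≤ C * ∫ y, g y ∂μ := by
  classical
  have hint : ∀ i ∈ Finset.univ, Integrable ((cell ⁻¹' {label i}).indicator g) μ :=
    fun i _ ↦ hg.indicator (hmeas _)
  have hoverlap (y : α) : ∑ i, (cell ⁻¹' {label i}).indicator g y ≤ C * g y := by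
    calc ∑ i, (cell ⁻¹' {label i}).indicator g y
        = {i | label i = cell y}.ncard * g y := by
          simp [Set.indicator_apply, eq_comm (a := cell y), ← Finset.sum_filter,
            Set.ncard_eq_toFinset_card']
      _ ≤ C * g y := by
          gcongr
          exacts [hg_nonneg y, hcount _]
  simp_rw [← integral_indicator (hmeas _)]
  rw [← integral_finsetSum _ hint, ← integral_const_mul]
  exact integral_mono (integrable_finsetSum _ hint) (hg.const_mul _) hoverlap

lemma sum_le_mul_integral_of_le_on_fiber (hmeas : ∀ k, MeasurableSet (cell ⁻¹' {k})) {v : ℝ}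
    (hv : 0 < v) (hvol : ∀ k, μ.real (cell ⁻¹' {k}) = v) {x : σ → α}
    (hcount : ∀ k, {i | cell (x i) = k}.ncard ≤ C) (hg : Integrable g μ) (hg_nonneg : 0 ≤ g)
    {f : α → ℝ} (hfg : ∀ y z, cell y = cell z → f y ≤ g z) :
    ∑ i, f (x i) ≤ C / v * ∫ y, g y ∂μ := by
  have hfinite (k : κ) : μ (cell ⁻¹' {k}) ≠ ⊤ := fun htop ↦
    hv.ne (by rw [← hvol k, measureReal_def, htop, ENNReal.toReal_top])
  have hterm (i : σ) : f (x i) * v ≤ ∫ y in cell ⁻¹' {cell (x i)}, g y ∂μ := by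
    rw [← hvol (cell (x i))]
    exact setIntegral_ge_of_const_le_real (hmeas _) (hfinite _)
      (fun y hy ↦ hfg _ _ (Eq.symm hy)) hg.integrableOn
  rw [div_mul_eq_mul_div, le_div_iff₀ hv, Finset.sum_mul]
  exact (Finset.sum_le_sum fun i _ ↦ hterm i).trans
    (sum_setIntegral_fiber_le hmeas hcount hg hg_nonneg)

end Partition

lemma exp_neg_mul_sq_le_of_seminorm_sub_le {E F : Type*} [AddGroup E] [FunLike F E ℝ]
    [AddGroupSeminormClass F E ℝ] (p : F) {β r : ℝ} (hβ : 0 ≤ β) {y z : E} (hr : p (z - y) ≤ r) :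
    Real.exp (-β * p y ^ 2) ≤ Real.exp (β * r ^ 2) * Real.exp (-(β / 2) * p z ^ 2) := by
  have hz : p z ≤ r + p y := by
    calc p z = p (z - y + y) := by rw [sub_add_cancel]
      _ ≤ p (z - y) + p y := map_add_le_add p _ _
      _ ≤ r + p y := by gcongr
  have hz_sq : p z ^ 2 ≤ 2 * (r ^ 2 + p y ^ 2) :=
    (pow_le_pow_left₀ (apply_nonneg p z) hz 2).trans add_sq_le
  rw [← Real.exp_add, Real.exp_le_exp]
  linarith [mul_le_mul_of_nonneg_left hz_sq hβ]

lemma apply_sub_le_sSup_of_isCompact {E : Type*} [Sub E] [TopologicalSpace E] [ContinuousSub E]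
    {p : E → ℝ} (hp : Continuous p) {K : Set E} (hK : IsCompact K) {x y : E} (hx : x ∈ K)
    (hy : y ∈ K) : p (x - y) ≤ sSup {r | ∃ x ∈ K, ∃ y ∈ K, r = p (x - y)} := by
  have hcont : Continuous fun z : E × E ↦ p (z.1 - z.2) := hp.comp continuous_sub
  refine le_csSup (((hK.prod hK).image hcont).bddAbove.mono ?_) ⟨x, hx, y, hy, rfl⟩
  rintro _ ⟨x, hx, y, hy, rfl⟩
  exact ⟨(x, y), ⟨hx, hy⟩, rfl⟩

section FiniteDimensional

variable {E : Type*} [NormedAddCommGroup E] [NormedSpace ℝ E] [FiniteDimensional ℝ E]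

lemma continuous_seminorm_of_finiteDimensional_s7 (p : Seminorm ℝ E) : Continuous p :=
  continuousOn_univ.1 (p.convexOn.continuousOn isOpen_univ)

lemma exists_pos_mul_norm_le_seminorm (p : Seminorm ℝ E) (hp : ∀ x, p x = 0 → x = 0) :
    ∃ m > 0, ∀ x, m * ‖x‖ ≤ p x := by
  have hpos : ∀ x ∈ Metric.sphere (0 : E) 1, 0 < p x := fun x hx ↦
    (apply_nonneg p x).lt_of_ne' fun h ↦ Metric.ne_of_mem_sphere hx one_ne_zero (hp x h)
  obtain ⟨m, hm, hm_le⟩ := (isCompact_sphere (0 : E) 1).exists_forall_le'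
    (continuous_seminorm_of_finiteDimensional_s7 p).continuousOn hpos
  refine ⟨m, hm, fun x ↦ ?_⟩
  rcases eq_or_ne x 0 with rfl | hx
  · simp
  · have hunit : m ≤ p (‖x‖⁻¹ • x) := hm_le _ (by simp [norm_smul, hx])
    rwa [map_smul_eq_mul, norm_inv, norm_norm, inv_mul_eq_div,
      le_div_iff₀ (norm_pos_iff.2 hx)] at hunit

variable [MeasurableSpace E] [BorelSpace E] (μ : Measure E) [μ.IsAddHaarMeasure]

lemma integrable_exp_neg_mul_sq_norm {b : ℝ} (hb : 0 < b) :
    Integrable (fun x : E ↦ Real.exp (-b * ‖x‖ ^ 2)) μ := by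
  rcases subsingleton_or_nontrivial E with hE | hE
  · exact .of_finite
  · rw [integrable_fun_norm_addHaar μ (f := fun t ↦ Real.exp (-b * t ^ 2))]
    simpa only [smul_eq_mul, Real.rpow_natCast] using
      integrableOn_rpow_mul_exp_neg_mul_sq hb
        (s := (Module.finrank ℝ E - 1 : ℕ)) (neg_one_lt_zero.trans_le (Nat.cast_nonneg _))

lemma integrable_exp_neg_mul_sq_seminorm (p : Seminorm ℝ E) (hp : ∀ x, p x = 0 → x = 0) {b : ℝ}
    (hb : 0 < b) : Integrable (fun x ↦ Real.exp (-b * p x ^ 2)) μ := by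
  obtain ⟨m, hm, hm_le⟩ := exists_pos_mul_norm_le_seminorm p hp
  have hcont := continuous_seminorm_of_finiteDimensional_s7 p
  refine (integrable_exp_neg_mul_sq_norm μ (b := b * m ^ 2) (by positivity)).mono'
    (by fun_prop) (.of_forall fun x ↦ ?_)
  rw [Real.norm_eq_abs, Real.abs_exp, Real.exp_le_exp, neg_mul, neg_mul, neg_le_neg_iff, mul_assoc,
    ← mul_pow]
  gcongr
  exact hm_le x

lemma integral_exp_neg_mul_sq_seminorm (p : Seminorm ℝ E) {b : ℝ} (hb : 0 < b) :
    ∫ x, Real.exp (-b * p x ^ 2) ∂μ =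
      b ^ (-(Module.finrank ℝ E : ℝ) / 2) * ∫ x, Real.exp (-p x ^ 2) ∂μ := by
  have hsmul (x : E) : Real.exp (-b * p x ^ 2) = Real.exp (-p (√b • x) ^ 2) := by
    rw [map_smul_eq_mul, mul_pow, Real.norm_eq_abs, sq_abs, Real.sq_sqrt hb.le, neg_mul]
  have hfactor : |(√b ^ Module.finrank ℝ E)⁻¹| = b ^ (-(Module.finrank ℝ E : ℝ) / 2) := by
    rw [abs_of_nonneg (by positivity), Real.sqrt_eq_rpow, ← Real.rpow_mul_natCast hb.le,
      ← Real.rpow_neg hb.le]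
    ring_nf
  simp_rw [hsmul]
  rw [Measure.integral_comp_smul μ (fun x ↦ Real.exp (-p x ^ 2)), hfactor, smul_eq_mul]

lemma sum_exp_neg_mul_sq_seminorm_le {κ σ : Type*} [Fintype σ] (p : Seminorm ℝ E)
    (hp : ∀ x, p x = 0 → x = 0) {cell : E → κ} (hmeas : ∀ k, MeasurableSet (cell ⁻¹' {k})) {v : ℝ}
    (hv : 0 < v) (hvol : ∀ k, μ.real (cell ⁻¹' {k}) = v) {r : ℝ}
    (hdiam : ∀ y z, cell y = cell z → p (y - z) ≤ r) {x : σ → E} {C : ℕ}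
    (hcount : ∀ k, {i | cell (x i) = k}.ncard ≤ C) (a : E) {β : ℝ} (hβ : 0 < β) :
    ∑ i, Real.exp (-β * p (x i - a) ^ 2) ≤
      C / v * (Real.exp (β * r ^ 2) * ∫ y, Real.exp (-(β / 2) * p y ^ 2) ∂μ) := by
  have hint : Integrable (fun y ↦ Real.exp (-(β / 2) * p (y - a) ^ 2)) μ :=
    (integrable_exp_neg_mul_sq_seminorm μ p hp (half_pos hβ)).comp_sub_right a
  have hcell : ∀ y z, cell y = cell z → Real.exp (-β * p (y - a) ^ 2) ≤
      Real.exp (β * r ^ 2) * Real.exp (-(β / 2) * p (z - a) ^ 2) := fun y z hyz ↦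
    exp_neg_mul_sq_le_of_seminorm_sub_le p hβ.le <| by
      simpa only [sub_sub_sub_cancel_right] using hdiam z y hyz.symm
  have hsum := sum_le_mul_integral_of_le_on_fiber hmeas hv hvol hcount
    (hint.const_mul (Real.exp (β * r ^ 2))) (fun y ↦ by positivity) hcell
  rwa [integral_const_mul,
    integral_sub_right_eq_self (fun y ↦ Real.exp (-(β / 2) * p y ^ 2)) a] at hsum

end FiniteDimensional

section Grid

variable {ι : Type*} {ρ : ℝ}

/-- The index `k ∈ ℤ^ι` of the half-open cube `ρ k + [0, ρ)^ι` containing a point; the fibers of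
this map are the cubes of the grid `ρ ℤ^ι` (for `ρ > 0`). -/
noncomputable def gridIndex (ρ : ℝ) (x : ι → ℝ) : ι → ℤ := fun j ↦ ⌊x j / ρ⌋

lemma gridIndex_eq_iff (hρ : 0 < ρ) {x : ι → ℝ} {k : ι → ℤ} :
    gridIndex ρ x = k ↔ ∀ j, x j ∈ Set.Ico (ρ * k j) (ρ * k j + ρ) := by
  simp only [gridIndex, funext_iff, Int.floor_eq_iff, le_div_iff₀ hρ, div_lt_iff₀ hρ, Set.mem_Ico,
    add_one_mul, mul_comm ρ]

lemma gridIndex_preimage_singleton (hρ : 0 < ρ) (k : ι → ℤ) :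
    gridIndex ρ ⁻¹' {k} = Set.univ.pi fun j ↦ Set.Ico (ρ * k j) (ρ * k j + ρ) := by
  ext x
  simp only [Set.mem_preimage, Set.mem_singleton_iff, gridIndex_eq_iff hρ, Set.mem_univ_pi]

lemma seminorm_sub_le_of_gridIndex_eq (hρ : 0 < ρ) (p : Seminorm ℝ (ι → ℝ)) {D : ℝ}
    (hD : ∀ x ∈ Set.Icc (0 : ι → ℝ) 1, ∀ y ∈ Set.Icc (0 : ι → ℝ) 1, p (x - y) ≤ D) {x y : ι → ℝ}
    (hxy : gridIndex ρ x = gridIndex ρ y) : p (x - y) ≤ ρ * D := by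
  let offset (z : ι → ℝ) : ι → ℝ := fun j ↦ Int.fract (z j / ρ)
  have hoffset (z : ι → ℝ) : offset z ∈ Set.Icc (0 : ι → ℝ) 1 :=
    ⟨fun _ ↦ Int.fract_nonneg _, fun _ ↦ (Int.fract_lt_one _).le⟩
  have hsub : x - y = ρ • (offset x - offset y) := by
    ext j
    have hfloor : ⌊x j / ρ⌋ = ⌊y j / ρ⌋ := congrFun hxy j
    simp only [offset, Int.fract, hfloor, Pi.sub_apply, Pi.smul_apply, smul_eq_mul]
    field_simp
    ring
  rw [hsub, map_smul_eq_mul, Real.norm_of_nonneg hρ.le]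
  gcongr
  exact hD _ (hoffset x) _ (hoffset y)

lemma measurableSet_gridIndex_preimage_singleton [Countable ι] (hρ : 0 < ρ) (k : ι → ℤ) :
    MeasurableSet (gridIndex ρ ⁻¹' {k}) := by
  rw [gridIndex_preimage_singleton hρ]
  exact .univ_pi fun _ ↦ measurableSet_Ico

lemma volume_real_gridIndex_preimage_singleton [Fintype ι] (hρ : 0 < ρ) (k : ι → ℤ) :
    volume.real (gridIndex ρ ⁻¹' {k}) = ρ ^ Fintype.card ι := by
  simp [gridIndex_preimage_singleton hρ, measureReal_def, volume_pi_pi, hρ.le]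

end Grid

/-- **Upper bound on the partition function.** If every cube `p + [0,ρ)^d`, `p ∈ ρℤᵈ`,
contains at most `C` of the points `ε_i`, then for every `ε` and `β > 0`,
`Σ_i e^{−β‖ε_i−ε‖²} ≤ (C c / ρ^d) e^{k²βρ²} (β/2)^{−d/2}`, where `k = diam([0,1]^d)` and
`c = ∫_{ℝᵈ} e^{−‖q‖²} dq`, both for an arbitrary norm `nrm` on `ℝᵈ`. -/
theorem partition_function_upper_bound (d : ℕ)
    (nrm : (Fin d → ℝ) → ℝ)
    (htri : ∀ x y : Fin d → ℝ, nrm (x + y) ≤ nrm x + nrm y)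
    (hhom : ∀ (s : ℝ) (x : Fin d → ℝ), nrm (s • x) = |s| * nrm x)
    (hdef : ∀ x : Fin d → ℝ, nrm x = 0 → x = 0)
    (k : ℝ)
    (hk : k = sSup {r : ℝ | ∃ x ∈ Set.Icc (0 : Fin d → ℝ) 1,
        ∃ y ∈ Set.Icc (0 : Fin d → ℝ) 1, r = nrm (x - y)})
    (c : ℝ) (hc : c = ∫ q : Fin d → ℝ, Real.exp (-nrm q ^ 2))
    (ρ : ℝ) (hρ : 0 < ρ)
    (N : ℕ) (εs : Fin N → Fin d → ℝ)
    (C : ℕ)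
    (hcount : ∀ p : Fin d → ℤ,
      Set.ncard {i : Fin N | ∀ j, εs i j ∈ Set.Ico (ρ * p j) (ρ * p j + ρ)} ≤ C)
    (ε : Fin d → ℝ) (β : ℝ) (hβ : 0 < β) :
    ∑ i : Fin N, Real.exp (-β * nrm (εs i - ε) ^ 2) ≤
      ((C : ℝ) * c / ρ ^ d) * Real.exp (k ^ 2 * β * ρ ^ 2) *
        (β / 2) ^ (-(d : ℝ) / 2) := by
  let p : Seminorm ℝ (Fin d → ℝ) := .of nrm htri hhom
  have hdiam : ∀ x y, gridIndex ρ x = gridIndex ρ y → p (x - y) ≤ ρ * k := fun x y hxy ↦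
    seminorm_sub_le_of_gridIndex_eq hρ p (fun x hx y hy ↦ hk ▸ apply_sub_le_sSup_of_isCompact
      (continuous_seminorm_of_finiteDimensional_s7 p) isCompact_Icc hx hy) hxy
  have hscale : ∫ q, Real.exp (-(β / 2) * p q ^ 2) = (β / 2) ^ (-(d : ℝ) / 2) * c := by
    rw [integral_exp_neg_mul_sq_seminorm volume p (half_pos hβ), Module.finrank_fin_fun, hc]
    rfl
  calc ∑ i, Real.exp (-β * p (εs i - ε) ^ 2)
      ≤ C / ρ ^ d * (Real.exp (β * (ρ * k) ^ 2) * ∫ q, Real.exp (-(β / 2) * p q ^ 2)) :=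
        sum_exp_neg_mul_sq_seminorm_le volume p hdef
          (measurableSet_gridIndex_preimage_singleton hρ) (pow_pos hρ d)
          (fun k ↦ by simpa using volume_real_gridIndex_preimage_singleton hρ k) hdiam
          (by simpa only [gridIndex_eq_iff hρ] using hcount) ε hβ
    _ = C * c / ρ ^ d * Real.exp (k ^ 2 * β * ρ ^ 2) * (β / 2) ^ (-(d : ℝ) / 2) := by
        rw [hscale]
        ring_nf
end
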